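/- Under the 2-group SBM with observation errors, suppose q ∈ (0,1), β ∈ (0,1), and restrict to the event Y ≠ Y*. Then there exists a strictly positive definite 4×4 covariance matrix Σ_μ such that the vector √n·(μ̂_1 − μ_1, μ̂_2 − μ_2, γ̂_1 − γ_1, γ̂_2 − γ_2) converges in distribution to the centered 4-dimensional Gaussian N(0, Σ_μ) as n → ∞. -/

import Mathlib

/-!
STATEMENT 14: Under the 2-group SBM with observation errors, restricted to the
event Y ≠ Y* (formalized via the conditional probability measure given that
event), there is a strictly positive definite 4×4 covariance Σ_μ such that
√n(μ̂₁ − μ₁, μ̂₂ − μ₂, γ̂₁ − γ₁, γ̂₂ − γ₂) converges in distribution to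
N(0, Σ_μ).  Convergence in distribution to the multivariate Gaussian is
expressed by the Cramér–Wold device.  The model hypothesis holds for all
large n.
-/

open MeasureTheory ProbabilityTheory Filter Finset

noncomputable section

/-- Mass of a label configuration: i.i.d. labels, `true` (minority) w.p. κ. -/
def labelMass (κ : ℝ) {n : ℕ} (l : Fin n → Bool) : ℝ :=
  ∏ i, (if l i then κ else 1 - κ)

/-- Conditional mass of an adjacency configuration given labels:
independent Bernoulli edges with success probability `B (l i) (l j)`, i < j. -/
def edgeMass {n : ℕ} (B : Bool → Bool → ℝ) (l : Fin n → Bool)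
    (a : Fin n → Fin n → Bool) : ℝ :=
  ∏ p ∈ Finset.univ.filter (fun p : Fin n × Fin n => p.1 < p.2),
    (if a p.1 p.2 then B (l p.1) (l p.2) else 1 - B (l p.1) (l p.2))

/-- Conditional mass of an observed network `y` given the construct network
`a` and the labels: each present edge of `a` is kept independently with
probability `1 − βm (l i) (l j)` (type II error rate `βm`), and no edges are
added. -/
def obsMass {n : ℕ} (βm : Bool → Bool → ℝ) (l : Fin n → Bool)
    (a y : Fin n → Fin n → Bool) : ℝ :=
  ∏ p ∈ Finset.univ.filter (fun p : Fin n × Fin n => p.1 < p.2),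
    (if a p.1 p.2 then
      (if y p.1 p.2 then 1 - βm (l p.1) (l p.2) else βm (l p.1) (l p.2))
     else (if y p.1 p.2 then 0 else 1))

/-- The symmetric 2×2 matrix with within-group values `x₁` (group 1 = `true`),
`x₂` (group 2 = `false`) and between-group value `xb`. -/
def sbmB (x₁ x₂ xb : ℝ) : Bool → Bool → ℝ :=
  fun x y => if x then (if y then x₁ else xb) else (if y then xb else x₂)

/-- `(P, c, A, Y, Y')` is a 2-group SBM with connectivity matrix `B` and two
conditionally independent noisy replicates `Y`, `Y'` with group-dependent
type II error rates `βm`.  The joint law is specified by its probability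
mass function. -/
structure IsObsSBM {Ω : Type*} [MeasurableSpace Ω] (P : Measure Ω) (n : ℕ)
    (B βm : Bool → Bool → ℝ) (κ : ℝ)
    (c : Ω → Fin n → Bool) (A Y Y' : Ω → Fin n → Fin n → Bool) : Prop where
  isProb : IsProbabilityMeasure P
  symmA : ∀ ω i j, A ω i j = A ω j i
  looplessA : ∀ ω i, A ω i i = false
  symmY : ∀ ω i j, Y ω i j = Y ω j i
  looplessY : ∀ ω i, Y ω i i = false
  symmY' : ∀ ω i j, Y' ω i j = Y' ω j i
  looplessY' : ∀ ω i, Y' ω i i = false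
  law : ∀ (l : Fin n → Bool) (a y y' : Fin n → Fin n → Bool),
    (∀ i j, a i j = a j i) → (∀ i, a i i = false) →
    (∀ i j, y i j = y j i) → (∀ i, y i i = false) →
    (∀ i j, y' i j = y' j i) → (∀ i, y' i i = false) →
    P {ω | c ω = l ∧ A ω = a ∧ Y ω = y ∧ Y' ω = y'}
      = ENNReal.ofReal (labelMass κ l * edgeMass B l a *
          obsMass βm l a y * obsMass βm l a y')

/-- Number of unordered pairs `i < j` selected by `sel`. -/
def pairCard {n : ℕ} (sel : Fin n → Fin n → Bool) : ℝ :=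
  ((Finset.univ.filter
      (fun p : Fin n × Fin n => p.1 < p.2 ∧ sel p.1 p.2 = true)).card : ℝ)

/-- Pairs within group 1. -/
def within1 {n : ℕ} (c : Fin n → Bool) : Fin n → Fin n → Bool :=
  fun i j => c i && c j

/-- Pairs within group 2. -/
def within2 {n : ℕ} (c : Fin n → Bool) : Fin n → Fin n → Bool :=
  fun i j => !(c i) && !(c j)

/-- Between-group pairs. -/
def between {n : ℕ} (c : Fin n → Bool) : Fin n → Fin n → Bool :=
  fun i j => c i != c j

/-- `û₁`: observed edge density over the pairs selected by `cls`. -/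
def u1hat {n : ℕ} (cls y : Fin n → Fin n → Bool) : ℝ :=
  pairCard (fun i j => cls i j && y i j) / pairCard cls

/-- `û₂`: half the disagreement rate of the two replicates over the pairs
selected by `cls`. -/
def u2hat {n : ℕ} (cls y y' : Fin n → Fin n → Bool) : ℝ :=
  pairCard (fun i j => cls i j && (y i j != y' i j)) / (2 * pairCard cls)

/-- Estimator of the type II error rate over the pairs selected by `cls`. -/
def betaHat {n : ℕ} (cls y y' : Fin n → Fin n → Bool) : ℝ :=
  u2hat cls y y' / u1hat cls y

/-- `γ̂₁ = √n (β̂_b − β̂₁)`. -/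
def gammaHat1 {n : ℕ} (c : Fin n → Bool) (y y' : Fin n → Fin n → Bool) : ℝ :=
  Real.sqrt n * (betaHat (between c) y y' - betaHat (within1 c) y y')

/-- `γ̂₂ = √n (β̂_b − β̂₂)`. -/
def gammaHat2 {n : ℕ} (c : Fin n → Bool) (y y' : Fin n → Fin n → Bool) : ℝ :=
  Real.sqrt n * (betaHat (between c) y y' - betaHat (within2 c) y y')

/-- `μ̂₁ = √n (û₁,₁/(1−β̂₁) − û₁,b/(1−β̂_b))`. -/
def muHat1 {n : ℕ} (c : Fin n → Bool) (y y' : Fin n → Fin n → Bool) : ℝ :=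
  Real.sqrt n * (u1hat (within1 c) y / (1 - betaHat (within1 c) y y')
    - u1hat (between c) y / (1 - betaHat (between c) y y'))

/-- `μ̂₂ = √n (û₁,₂/(1−β̂₂) − û₁,b/(1−β̂_b))`. -/
def muHat2 {n : ℕ} (c : Fin n → Bool) (y y' : Fin n → Fin n → Bool) : ℝ :=
  Real.sqrt n * (u1hat (within2 c) y / (1 - betaHat (within2 c) y y')
    - u1hat (between c) y / (1 - betaHat (between c) y y'))

/-- Quadratic form of a 4×4 matrix. -/
def quadForm4 (M : Matrix (Fin 4) (Fin 4) ℝ) (t : Fin 4 → ℝ) : ℝ :=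
  ∑ k, ∑ k', t k * M k k' * t k'

/-! ### Part 1: one noisy edge and analytic preliminaries -/

/-- `(1+g)^N → exp t` if `N g → t` and `N → ∞`. -/
lemma sbm_pow_tendsto {N : ℕ → ℕ} {g : ℕ → ℂ} {t : ℂ}
    (hN : Tendsto (fun k => (N k : ℝ)) atTop atTop)
    (hg : Tendsto (fun k => (N k : ℂ) * g k) atTop (nhds t)) :
    Tendsto (fun k => (1 + g k) ^ (N k)) atTop (nhds (Complex.exp t)) := by
  have hinv : Tendsto (fun k => ((N k : ℝ) : ℂ)⁻¹) atTop (nhds 0) := by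
    have h1 : Tendsto (fun k => ((N k : ℝ))⁻¹) atTop (nhds 0) := tendsto_inv_atTop_zero.comp hN
    have := (Complex.continuous_ofReal.tendsto 0).comp h1
    simpa [Function.comp_def] using this
  have hpos : ∀ᶠ k in atTop, (1 : ℝ) ≤ N k := hN.eventually_ge_atTop 1
  have hg0 : Tendsto g atTop (nhds 0) := by
    have := hg.mul hinv
    rw [mul_zero] at this
    refine this.congr' ?_
    filter_upwards [hpos] with k hk
    have : (N k : ℂ) ≠ 0 := by
      have : (N k : ℝ) ≠ 0 := by linarith
      exact_mod_cast this
    push_cast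
    field_simp
  have hlog : Tendsto (fun k => (N k : ℂ) * Complex.log (1 + g k)) atTop (nhds t) := by
    have hO := Complex.log_sub_self_isBigO
    have h2 : (fun k => Complex.log (1 + g k) - g k) =O[atTop] (fun k => g k ^ 2) := by
      simpa [Function.comp_def] using hO.comp_tendsto hg0
    have h3 : (fun k => (N k : ℂ) * (Complex.log (1 + g k) - g k)) =O[atTop]
        (fun k => ((N k : ℂ) * g k) * g k) := by
      have := (Asymptotics.isBigO_refl (fun k => (N k : ℂ)) atTop).mul h2
      refine this.congr (fun _ => rfl) (fun k => by ring)
    have h4 : Tendsto (fun k => ((N k : ℂ) * g k) * g k) atTop (nhds 0) := by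
      simpa using hg.mul hg0
    have h5 := h3.trans_tendsto h4
    have h6 := h5.add hg
    rw [zero_add] at h6
    refine h6.congr (fun k => by ring)
  have hexp := (Complex.continuous_exp.tendsto t).comp hlog
  refine hexp.congr' ?_
  have hne : ∀ᶠ k in atTop, 1 + g k ≠ 0 := by
    have : Tendsto (fun k => 1 + g k) atTop (nhds (1 + 0)) := hg0.const_add 1
    rw [add_zero] at this
    exact this.eventually_ne one_ne_zero
  filter_upwards [hne] with k hk
  simp only [Function.comp_apply]
  rw [Complex.exp_nat_mul, Complex.exp_log hk]

/-- Third order Taylor bound. -/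
lemma sbm_exp_taylor (x : ℝ) (hx : |x| ≤ 1) :
    ‖Complex.exp (x * Complex.I) - (1 + x * Complex.I - x ^ 2 / 2)‖ ≤ |x| ^ 3 := by
  have h := Complex.exp_bound (x := x * Complex.I) (by simpa using hx) (n := 3) (by norm_num)
  have e : (1 + x * Complex.I - x ^ 2 / 2 : ℂ)
      = ∑ m ∈ Finset.range 3, ((x : ℂ) * Complex.I) ^ m / (m.factorial : ℂ) := by
    simp [Finset.sum_range_succ, Nat.factorial, mul_pow]
    ring
  rw [e]
  refine h.trans ?_
  simp only [Complex.norm_mul, Complex.norm_I, mul_one, Complex.norm_real, Real.norm_eq_abs]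
  have : 0 ≤ |x| ^ 3 := by positivity
  norm_num [Nat.factorial]
  nlinarith

/-- Mass of `(a, y, y')` for one pair. -/
def eMass (p b : ℝ) (z : Bool × Bool × Bool) : ℝ :=
  (if z.1 then p else 1 - p) *
    (if z.1 then (if z.2.1 then 1 - b else b) else (if z.2.1 then 0 else 1)) *
    (if z.1 then (if z.2.2 then 1 - b else b) else (if z.2.2 then 0 else 1))

lemma eMass_nonneg {p b : ℝ} (hp : p ∈ Set.Icc (0 : ℝ) 1) (hb : b ∈ Set.Icc (0 : ℝ) 1)
    (z : Bool × Bool × Bool) : 0 ≤ eMass p b z := by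
  obtain ⟨hp0, hp1⟩ := hp
  obtain ⟨hb0, hb1⟩ := hb
  unfold eMass
  refine mul_nonneg (mul_nonneg ?_ ?_) ?_ <;> split_ifs <;> linarith

lemma sum_bool3 {E : Type*} [AddCommMonoid E] (f : Bool × Bool × Bool → E) :
    ∑ z, f z = ((f (true, true, true) + f (true, true, false)) +
      (f (true, false, true) + f (true, false, false))) +
      ((f (false, true, true) + f (false, true, false)) +
      (f (false, false, true) + f (false, false, false))) := by
  simp [Fintype.sum_prod_type]

/-- Law of `(a, y, y')` for one pair. -/
def eMeas (p b : ℝ) : Measure (Bool × Bool × Bool) :=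
  ∑ z, ENNReal.ofReal (eMass p b z) • Measure.dirac z

lemma eMass_sum (p b : ℝ) : ∑ z, eMass p b z = 1 := by
  rw [sum_bool3]; simp [eMass]; ring

lemma eMeas_singleton (p b : ℝ) (z : Bool × Bool × Bool) :
    eMeas p b {z} = ENNReal.ofReal (eMass p b z) := by
  rw [eMeas, Measure.finsetSum_apply]
  rw [Finset.sum_eq_single z]
  · simp
  · intro w _ hw; simp [hw]
  · simp

lemma eMeas_isProb {p b : ℝ} (hp : p ∈ Set.Icc (0 : ℝ) 1) (hb : b ∈ Set.Icc (0 : ℝ) 1) :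
    IsProbabilityMeasure (eMeas p b) := by
  constructor
  rw [eMeas, Measure.finsetSum_apply]
  simp only [Measure.smul_apply, measure_univ, smul_eq_mul, mul_one]
  rw [← ENNReal.ofReal_sum_of_nonneg (fun z _ => eMass_nonneg hp hb z), eMass_sum]
  simp

lemma eMeas_integral {E : Type*} [NormedAddCommGroup E] [NormedSpace ℝ E] [CompleteSpace E]
    {p b : ℝ} (hp : p ∈ Set.Icc (0 : ℝ) 1)
    (hb : b ∈ Set.Icc (0 : ℝ) 1) (f : Bool × Bool × Bool → E) :
    ∫ z, f z ∂(eMeas p b) = ∑ z, eMass p b z • f z := by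
  have := eMeas_isProb hp hb
  rw [integral_fintype (Integrable.of_finite)]
  refine Finset.sum_congr rfl fun z _ => ?_
  rw [Measure.real, eMeas_singleton, ENNReal.toReal_ofReal (eMass_nonneg hp hb z)]

/-- Indicator of an observed edge. -/
def fY (z : Bool × Bool × Bool) : ℝ := if z.2.1 then 1 else 0

/-- Half the disagreement indicator. -/
def fD (z : Bool × Bool × Bool) : ℝ := if z.2.1 != z.2.2 then 1 / 2 else 0

lemma fY_mem (z : Bool × Bool × Bool) : fY z ∈ Set.Icc (0 : ℝ) 1 := by
  obtain ⟨a, y, y'⟩ := z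
  cases y <;> simp [fY]

lemma fD_mem (z : Bool × Bool × Bool) : fD z ∈ Set.Icc (0 : ℝ) 1 := by
  obtain ⟨a, y, y'⟩ := z
  cases y <;> cases y' <;> norm_num [fD]

lemma fY_mean {p b : ℝ} (hp : p ∈ Set.Icc (0 : ℝ) 1) (hb : b ∈ Set.Icc (0 : ℝ) 1) :
    ∫ z, fY z ∂(eMeas p b) = p * (1 - b) := by
  rw [eMeas_integral hp hb, sum_bool3]; simp [eMass, fY]; ring

lemma fD_mean {p b : ℝ} (hp : p ∈ Set.Icc (0 : ℝ) 1) (hb : b ∈ Set.Icc (0 : ℝ) 1) :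
    ∫ z, fD z ∂(eMeas p b) = p * b * (1 - b) := by
  rw [eMeas_integral hp hb, sum_bool3]; simp [eMass, fD]; ring

/-- Centered linear influence of one pair. -/
def xi (p b α γ : ℝ) (z : Bool × Bool × Bool) : ℝ :=
  α * (fY z - p * (1 - b)) + γ * (fD z - p * b * (1 - b))

/-- Variance of `xi`. -/
def xiVar (p b α γ : ℝ) : ℝ := ∑ z, eMass p b z * xi p b α γ z ^ 2

lemma xi_mean (p b α γ : ℝ) : ∑ z, eMass p b z * xi p b α γ z = 0 := by
  rw [sum_bool3]; simp [eMass, xi, fY, fD]; ring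

lemma xiVar_eq (p b α γ : ℝ) : xiVar p b α γ =
    α ^ 2 * (p * (1 - b) - (p * (1 - b)) ^ 2)
    + γ ^ 2 * (p * b * (1 - b) / 2 - (p * b * (1 - b)) ^ 2)
    + 2 * (α * γ) * (p * b * (1 - b) / 2 - p * (1 - b) * (p * b * (1 - b))) := by
  rw [xiVar, sum_bool3]; simp [eMass, xi, fY, fD]; ring

lemma xi_bound {p b : ℝ} (hp : p ∈ Set.Icc (0 : ℝ) 1) (hb : b ∈ Set.Icc (0 : ℝ) 1) (α γ : ℝ)
    (z : Bool × Bool × Bool) : |xi p b α γ z| ≤ |α| + |γ| := by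
  have h1 := fY_mem z
  have h2 := fD_mem z
  obtain ⟨hp0, hp1⟩ := hp
  obtain ⟨hb0, hb1⟩ := hb
  have hm1 : 0 ≤ p * (1 - b) := mul_nonneg hp0 (by linarith)
  have hm1' : p * (1 - b) ≤ 1 := mul_le_one₀ hp1 (by linarith) (by linarith)
  have hm2 : 0 ≤ p * b * (1 - b) := mul_nonneg (mul_nonneg hp0 hb0) (by linarith)
  have hm2' : p * b * (1 - b) ≤ 1 :=
    mul_le_one₀ (mul_le_one₀ hp1 hb0 hb1) (by linarith) (by linarith)
  unfold xi
  refine (abs_add_le _ _).trans ?_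
  rw [abs_mul, abs_mul]
  have a1 : |fY z - p * (1 - b)| ≤ 1 := abs_le.2 ⟨by linarith [h1.1], by linarith [h1.2]⟩
  have a2 : |fD z - p * b * (1 - b)| ≤ 1 := abs_le.2 ⟨by linarith [h2.1], by linarith [h2.2]⟩
  have := mul_le_mul_of_nonneg_left a1 (abs_nonneg α)
  have := mul_le_mul_of_nonneg_left a2 (abs_nonneg γ)
  linarith

/-- Characteristic function of one influence term, second order expansion. -/
lemma xi_charFun_bound {p b : ℝ} (hp : p ∈ Set.Icc (0 : ℝ) 1) (hb : b ∈ Set.Icc (0 : ℝ) 1)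
    (α γ h : ℝ) (hh : |h| * (|α| + |γ|) ≤ 1) :
    ‖∫ z, Complex.exp ((h * xi p b α γ z : ℝ) * Complex.I) ∂(eMeas p b)
      - (1 - (h ^ 2 * xiVar p b α γ / 2 : ℝ))‖ ≤ (|h| * (|α| + |γ|)) ^ 3 := by
  rw [eMeas_integral hp hb]
  have e : (1 - (h ^ 2 * xiVar p b α γ / 2 : ℝ) : ℂ)
      = ∑ z, eMass p b z • (1 + (h * xi p b α γ z : ℝ) * Complex.I
          - ((h * xi p b α γ z : ℝ) : ℂ) ^ 2 / 2) := by
    have e1 := xi_mean p b α γ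
    have e2 := eMass_sum p b
    have e3 : xiVar p b α γ = ∑ z, eMass p b z * xi p b α γ z ^ 2 := rfl
    have c1 : ∑ z, (eMass p b z : ℂ) * (xi p b α γ z : ℂ) = 0 := by exact_mod_cast e1
    have c2 : ∑ z, (eMass p b z : ℂ) = 1 := by exact_mod_cast e2
    have c3 : (xiVar p b α γ : ℂ) = ∑ z, (eMass p b z : ℂ) * (xi p b α γ z : ℂ) ^ 2 := by
      rw [e3]; push_cast; rfl
    have : ∀ z, eMass p b z • (1 + (h * xi p b α γ z : ℝ) * Complex.I
          - ((h * xi p b α γ z : ℝ) : ℂ) ^ 2 / 2)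
        = (eMass p b z : ℂ) + (h * Complex.I) * ((eMass p b z : ℂ) * (xi p b α γ z : ℂ))
          - (h ^ 2 / 2) * ((eMass p b z : ℂ) * (xi p b α γ z : ℂ) ^ 2) := by
      intro z
      rw [Complex.real_smul]; push_cast; ring
    simp_rw [this]
    rw [Finset.sum_sub_distrib, Finset.sum_add_distrib, ← Finset.mul_sum, ← Finset.mul_sum,
      c1, c2, ← c3]
    push_cast; ring
  rw [e, ← Finset.sum_sub_distrib]
  refine (norm_sum_le _ _).trans ?_
  have hb' : ∀ z, |h * xi p b α γ z| ≤ |h| * (|α| + |γ|) := by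
    intro z
    rw [abs_mul]
    exact mul_le_mul_of_nonneg_left (xi_bound hp hb α γ z) (abs_nonneg _)
  calc _ ≤ ∑ z, eMass p b z * (|h| * (|α| + |γ|)) ^ 3 := by
        refine Finset.sum_le_sum fun z _ => ?_
        rw [← smul_sub, norm_smul, Real.norm_of_nonneg (eMass_nonneg hp hb z)]
        refine mul_le_mul_of_nonneg_left ?_ (eMass_nonneg hp hb z)
        refine (sbm_exp_taylor _ ((hb' z).trans hh)).trans ?_
        exact pow_le_pow_left₀ (abs_nonneg _) (hb' z) 3
    _ = _ := by rw [← Finset.sum_mul, eMass_sum, one_mul]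

/-! ### Part 2: arrays of independent noisy edges with classes -/

/-- Product law of the noisy edges, given the classes of the pairs. -/
def arrMeas {ι J : Type} [Fintype ι] (cl : ι → J) (p b : J → ℝ) :
    Measure (ι → Bool × Bool × Bool) :=
  Measure.pi fun i => eMeas (p (cl i)) (b (cl i))

/-- Number of pairs in a class. -/
def clN {ι J : Type} [Fintype ι] [DecidableEq J] (cl : ι → J) (x : J) : ℕ :=
  #{i | cl i = x}

/-- Average over a class. -/
def avg {ι J : Type} [Fintype ι] [DecidableEq J] (cl : ι → J) (x : J)
    (f : Bool × Bool × Bool → ℝ) (z : ι → Bool × Bool × Bool) : ℝ :=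
  (∑ i with cl i = x, f (z i)) / clN cl x

lemma arrMeas_isProb {ι J : Type} [Fintype ι] {cl : ι → J} {p b : J → ℝ}
    (hp : ∀ x, p x ∈ Set.Icc (0 : ℝ) 1) (hb : ∀ x, b x ∈ Set.Icc (0 : ℝ) 1) :
    IsProbabilityMeasure (arrMeas cl p b) := by
  have : ∀ i, IsProbabilityMeasure (eMeas (p (cl i)) (b (cl i))) :=
    fun i => eMeas_isProb (hp _) (hb _)
  unfold arrMeas
  infer_instance

/-- Chebyshev bound for class averages. -/
lemma arr_cheb {ι J : Type} [Fintype ι] [DecidableEq J] {cl : ι → J} {p b : J → ℝ}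
    (hp : ∀ x, p x ∈ Set.Icc (0 : ℝ) 1) (hb : ∀ x, b x ∈ Set.Icc (0 : ℝ) 1)
    {f : Bool × Bool × Bool → ℝ} (hf : ∀ z, f z ∈ Set.Icc (0 : ℝ) 1) {x : J} {m : ℝ}
    (hm : ∫ z, f z ∂(eMeas (p x) (b x)) = m) {c : ℝ} (hc : 0 < c) (hN : 0 < clN cl x) :
    (arrMeas cl p b).real {z | c ≤ |avg cl x f z - m|} ≤ 1 / (clN cl x * c ^ 2) := by
  have hPr : ∀ i, IsProbabilityMeasure (eMeas (p (cl i)) (b (cl i))) :=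
    fun i => eMeas_isProb (hp _) (hb _)
  have := arrMeas_isProb (cl := cl) hp hb
  have hNR : (0 : ℝ) < clN cl x := by exact_mod_cast hN
  set X : ι → Bool × Bool × Bool → ℝ := fun i z => if cl i = x then f z else 0 with hX
  set S : (ι → Bool × Bool × Bool) → ℝ := ∑ i, fun ω ↦ X i (ω i) with hS
  have hSeq : ∀ z, S z = clN cl x * avg cl x f z := by
    intro z
    simp only [hS, hX, avg, Finset.sum_apply]
    rw [Finset.sum_filter]
    field_simp
  have hvar : Var[S; arrMeas cl p b] ≤ clN cl x := by
    rw [hS, arrMeas, variance_sum_pi (fun i => MemLp.of_discrete)]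
    have : (clN cl x : ℝ) = ∑ i, if cl i = x then (1 : ℝ) else 0 := by
      simp [clN]
    rw [this]
    refine Finset.sum_le_sum fun i _ => ?_
    split_ifs with h
    · have := variance_le_sq_of_bounded (μ := eMeas (p (cl i)) (b (cl i))) (X := X i)
        (a := 0) (b := 1) (Eventually.of_forall fun z => by simp only [hX, h, if_true]; exact hf z)
        (Measurable.of_discrete.aemeasurable)
      refine this.trans (by norm_num)
    · have : X i = 0 := by ext z; simp [hX, h]
      rw [this]; simp
  have hmean : ∫ z, S z ∂(arrMeas cl p b) = clN cl x * m := by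
    have : S = fun z => ∑ i, X i (z i) := by ext z; simp [hS]
    rw [this, integral_finsetSum _ (fun i _ => Integrable.of_finite)]
    have h2 : ∀ i, ∫ z, X i (z i) ∂(arrMeas cl p b) = if cl i = x then m else 0 := by
      intro i
      rw [arrMeas, integral_comp_eval (μ := fun i => eMeas (p (cl i)) (b (cl i)))
        (f := X i) (Measurable.of_discrete.aestronglyMeasurable)]
      split_ifs with h
      · simp only [hX, h, if_true]; exact hm
      · simp [hX, h]
    simp_rw [h2]
    simp [clN, ← Finset.sum_filter]
  have hch := meas_ge_le_variance_div_sq (μ := arrMeas cl p b) (X := S) MemLp.of_discrete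
    (c := clN cl x * c) (by positivity)
  rw [hmean] at hch
  have hset : {z | c ≤ |avg cl x f z - m|} =
      {z | (clN cl x : ℝ) * c ≤ |S z - clN cl x * m|} := by
    ext z
    simp only [Set.mem_ofPred_eq]
    rw [hSeq, ← mul_sub, abs_mul, abs_of_pos hNR, mul_le_mul_iff_right₀ hNR]
  rw [hset, Measure.real]
  refine (ENNReal.toReal_mono ENNReal.ofReal_ne_top hch).trans ?_
  rw [ENNReal.toReal_ofReal (div_nonneg (variance_nonneg _ _) (by positivity))]
  calc _ ≤ (clN cl x : ℝ) / (clN cl x * c) ^ 2 := by gcongr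
    _ = _ := by field_simp

lemma arr_cheb_scaled {ι J : Type} [Fintype ι] [DecidableEq J] {cl : ι → J} {p b : J → ℝ}
    (hp : ∀ x, p x ∈ Set.Icc (0 : ℝ) 1) (hb : ∀ x, b x ∈ Set.Icc (0 : ℝ) 1)
    {f : Bool × Bool × Bool → ℝ} (hf : ∀ z, f z ∈ Set.Icc (0 : ℝ) 1) {x : J} {m : ℝ}
    (hm : ∫ z, f z ∂(eMeas (p x) (b x)) = m) {c : ℝ} (hc : 0 < c) (hN : 0 < clN cl x)
    {n : ℝ} (hn : 0 < n) :
    (arrMeas cl p b).real {z | c ≤ n * |avg cl x f z - m|} ≤ (n ^ 2 / clN cl x) / c ^ 2 := by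
  have h := arr_cheb hp hb hf hm (c := c / n) (by positivity) hN
  have hset : {z | c ≤ n * |avg cl x f z - m|} = {z | c / n ≤ |avg cl x f z - m|} := by
    ext z
    simp only [Set.mem_ofPred_eq]
    rw [div_le_iff₀' hn]
  rw [hset]
  refine h.trans (le_of_eq ?_)
  have hNR : (0 : ℝ) < clN cl x := by exact_mod_cast hN
  field_simp

/-- The smooth function of the two class averages. -/
def gfun (a c : ℝ) (u : ℝ × ℝ) : ℝ := a * (u.1 / (1 - u.2 / u.1)) + c * (u.2 / u.1)

/-- Derivative coefficients of `gfun`. -/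
def alph (q β a c : ℝ) : ℝ := a * (1 - 2 * β) / (1 - β) ^ 2 - c * β / (q * (1 - β))

/-- Derivative coefficients of `gfun`. -/
def gamm (q β a c : ℝ) : ℝ := a / (1 - β) ^ 2 + c / (q * (1 - β))

lemma gfun_val {p b : ℝ} (a c : ℝ) (hp : p ≠ 0) (hb : b ≠ 1) :
    gfun a c (p * (1 - b), p * b * (1 - b)) = a * p + c * b := by
  have hb' : 1 - b ≠ 0 := sub_ne_zero.2 (Ne.symm hb)
  have : p * b * (1 - b) / (p * (1 - b)) = b := by field_simp
  simp only [gfun]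
  rw [this]
  field_simp

lemma gfun_strict {q β : ℝ} (a c : ℝ) (hq : q ≠ 0) (hβ : β ≠ 1) :
    HasStrictFDerivAt (gfun a c)
      (alph q β a c • ContinuousLinearMap.fst ℝ ℝ ℝ + gamm q β a c • ContinuousLinearMap.snd ℝ ℝ ℝ)
      (q * (1 - β), q * β * (1 - β)) := by
  have hb' : 1 - β ≠ 0 := sub_ne_zero.2 (Ne.symm hβ)
  have hu : q * (1 - β) ≠ 0 := mul_ne_zero hq hb'
  set m : ℝ × ℝ := (q * (1 - β), q * β * (1 - β)) with hm
  have h1 : HasStrictFDerivAt (fun u : ℝ × ℝ => u.1) (ContinuousLinearMap.fst ℝ ℝ ℝ) m :=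
    hasStrictFDerivAt_fst
  have h2 : HasStrictFDerivAt (fun u : ℝ × ℝ => u.2) (ContinuousLinearMap.snd ℝ ℝ ℝ) m :=
    hasStrictFDerivAt_snd
  have h3 : HasStrictFDerivAt (fun u : ℝ × ℝ => u.1⁻¹) _ m :=
    (hasStrictDerivAt_inv (x := m.1) hu).comp_hasStrictFDerivAt m h1
  have h4 := h2.mul h3
  have hmr : 1 - m.2 * m.1⁻¹ = 1 - β := by
    simp only [hm]; field_simp
  have h5 := h4.const_sub 1
  have h6 := (hasStrictDerivAt_inv (x := 1 - m.2 * m.1⁻¹) (by rw [hmr]; exact hb'))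
    |>.comp_hasStrictFDerivAt m h5
  have h7 := ((h1.mul h6).const_mul a).add (h4.const_mul c)
  have hfun : gfun a c = (fun u : ℝ × ℝ => a * (u.1 * (1 - u.2 * u.1⁻¹)⁻¹) + c * (u.2 * u.1⁻¹)) := by
    ext u; simp [gfun, div_eq_mul_inv]
  rw [hfun]
  refine h7.congr_fderiv ?_
  ext
  · simp [hmr, alph]
    simp only [hm]
    field_simp
    ring
  · simp [hmr, gamm]
    simp only [hm]
    field_simp

/-! ### Part 3: linearization, and the conditional characteristic function -/

/-- Convergence to zero in probability along a sequence of spaces. -/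
def TP {Z : ℕ → Type} [∀ k, MeasurableSpace (Z k)] (ν : ∀ k, Measure (Z k))
    (X : ∀ k, Z k → ℝ) : Prop :=
  ∀ ε > 0, Tendsto (fun k => (ν k).real {z | ε ≤ |X k z|}) atTop (nhds 0)

lemma arr_consistent {J : Type} [DecidableEq J] {ι : ℕ → Type} [∀ k, Fintype (ι k)]
    {cl : ∀ k, ι k → J} {p b : ℕ → J → ℝ}
    (hp : ∀ k x, p k x ∈ Set.Icc (0 : ℝ) 1) (hb : ∀ k x, b k x ∈ Set.Icc (0 : ℝ) 1)
    {f : Bool × Bool × Bool → ℝ} (hf : ∀ z, f z ∈ Set.Icc (0 : ℝ) 1) {x : J} {m : ℕ → ℝ}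
    (hm : ∀ k, ∫ z, f z ∂(eMeas (p k x) (b k x)) = m k)
    (hN : Tendsto (fun k => (clN (cl k) x : ℝ)) atTop atTop) :
    TP (fun k => arrMeas (cl k) (p k) (b k)) (fun k z => avg (cl k) x f z - m k) := by
  intro ε hε
  have h1 : Tendsto (fun k => 1 / ((clN (cl k) x : ℝ) * ε ^ 2)) atTop (nhds 0) := by
    have : Tendsto (fun k => ((clN (cl k) x : ℝ) * ε ^ 2)) atTop atTop :=
      hN.atTop_mul_const (by positivity)
    simp only [one_div]
    exact tendsto_inv_atTop_zero.comp this
  refine tendsto_of_tendsto_of_tendsto_of_le_of_le' tendsto_const_nhds h1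
    (Eventually.of_forall fun k => measureReal_nonneg) ?_
  filter_upwards [hN.eventually_ge_atTop 1] with k hk
  refine arr_cheb (hp k) (hb k) hf (hm k) hε ?_
  exact_mod_cast (by linarith : (0 : ℝ) < clN (cl k) x)

/-- Delta method for one class. -/
lemma arr_linear {J : Type} [DecidableEq J] {ι : ℕ → Type} [∀ k, Fintype (ι k)]
    {cl : ∀ k, ι k → J} {p b : ℕ → J → ℝ}
    (hp : ∀ k x, p k x ∈ Set.Icc (0 : ℝ) 1) (hb : ∀ k x, b k x ∈ Set.Icc (0 : ℝ) 1)
    {x : J} {q β : ℝ} (hq0 : q ≠ 0) (hβ1 : β ≠ 1)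
    (hpq : Tendsto (fun k => p k x) atTop (nhds q)) (hbβ : Tendsto (fun k => b k x) atTop (nhds β))
    (hN : Tendsto (fun k => (clN (cl k) x : ℝ)) atTop atTop)
    {n : ℕ → ℝ} (hn : ∀ᶠ k in atTop, 0 < n k) {ρ : ℝ}
    (hρ : Tendsto (fun k => n k ^ 2 / clN (cl k) x) atTop (nhds ρ)) (a c : ℝ) :
    TP (fun k => arrMeas (cl k) (p k) (b k)) (fun k z =>
      n k * (gfun a c (avg (cl k) x fY z, avg (cl k) x fD z) - (a * p k x + c * b k x))
      - n k * (alph q β a c * (avg (cl k) x fY z - p k x * (1 - b k x))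
        + gamm q β a c * (avg (cl k) x fD z - p k x * b k x * (1 - b k x)))) := by
  intro η hη
  have hρ0 : 0 ≤ ρ := ge_of_tendsto' hρ fun k => by positivity
  rw [Metric.tendsto_atTop']
  intro e he
  set M : ℝ := Real.sqrt (8 * (ρ + 1) / e) with hM
  have hMpos : 0 < M := Real.sqrt_pos.2 (by positivity)
  have hM2 : M ^ 2 = 8 * (ρ + 1) / e := Real.sq_sqrt (by positivity)
  have hstr := gfun_strict a c hq0 hβ1
  have hlit := hstr.isLittleO
  have hev := hlit.def (c := η / (2 * M)) (by positivity)
  obtain ⟨δ, hδ, hball⟩ := Metric.eventually_nhds_iff.1 hev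
  have hY := arr_consistent hp hb fY_mem (fun k => fY_mean (hp k x) (hb k x)) hN (δ / 2)
    (by positivity)
  have hD := arr_consistent hp hb fD_mem (fun k => fD_mean (hp k x) (hb k x)) hN (δ / 2)
    (by positivity)
  have hm1 : Tendsto (fun k => p k x * (1 - b k x)) atTop (nhds (q * (1 - β))) :=
    hpq.mul (hbβ.const_sub 1)
  have hm2 : Tendsto (fun k => p k x * b k x * (1 - b k x)) atTop (nhds (q * β * (1 - β))) :=
    (hpq.mul hbβ).mul (hbβ.const_sub 1)
  have ev1 := hY.eventually (gt_mem_nhds (show (0 : ℝ) < e / 4 by positivity))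
  have ev2 := hD.eventually (gt_mem_nhds (show (0 : ℝ) < e / 4 by positivity))
  have ev3 := Metric.tendsto_nhds.1 hm1 (δ / 2) (by positivity)
  have ev4 := Metric.tendsto_nhds.1 hm2 (δ / 2) (by positivity)
  have ev5 := hρ.eventually (gt_mem_nhds (show ρ < ρ + 1 by linarith))
  have ev6 := hN.eventually_ge_atTop 1
  have ev7 := hpq.eventually_ne hq0
  have ev8 := hbβ.eventually_ne hβ1
  have key : ∀ᶠ k in atTop, dist ((arrMeas (cl k) (p k) (b k)).real {z | η ≤
      |n k * (gfun a c (avg (cl k) x fY z, avg (cl k) x fD z) - (a * p k x + c * b k x))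
      - n k * (alph q β a c * (avg (cl k) x fY z - p k x * (1 - b k x))
        + gamm q β a c * (avg (cl k) x fD z - p k x * b k x * (1 - b k x)))|}) 0 < e := by
    filter_upwards [ev1, ev2, ev3, ev4, ev5, ev6, ev7, ev8, hn] with
      k h1 h2 h3 h4 h5 h6 h7 h8 h9
    have := arrMeas_isProb (cl := cl k) (hp k) (hb k)
    have hNk : 0 < clN (cl k) x := by exact_mod_cast (by linarith : (0 : ℝ) < clN (cl k) x)
    have t1 := arr_cheb_scaled (cl := cl k) (hp k) (hb k) fY_mem (fY_mean (hp k x) (hb k x))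
      hMpos hNk h9
    have t2 := arr_cheb_scaled (cl := cl k) (hp k) (hb k) fD_mem (fD_mean (hp k x) (hb k x))
      hMpos hNk h9
    have hsm : (n k ^ 2 / clN (cl k) x) / M ^ 2 < e / 4 := by
      rw [hM2, div_lt_iff₀ (by positivity)]
      have : e / 4 * (8 * (ρ + 1) / e) = 2 * (ρ + 1) := by field_simp; norm_num
      rw [this]; linarith
    rw [Real.dist_0_eq_abs, abs_of_nonneg measureReal_nonneg]
    refine lt_of_le_of_lt (measureReal_mono (s₂ :=
      ({z | δ / 2 ≤ |avg (cl k) x fY z - p k x * (1 - b k x)|} ∪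
       {z | δ / 2 ≤ |avg (cl k) x fD z - p k x * b k x * (1 - b k x)|}) ∪
      ({z | M ≤ n k * |avg (cl k) x fY z - p k x * (1 - b k x)|} ∪
       {z | M ≤ n k * |avg (cl k) x fD z - p k x * b k x * (1 - b k x)|})) ?_) ?_
    · intro z hz
      by_contra hcon
      simp only [Set.mem_union, Set.mem_ofPred_eq, not_or, not_le] at hcon
      obtain ⟨⟨c1, c2⟩, c3, c4⟩ := hcon
      set u1 := avg (cl k) x fY z
      set u2 := avg (cl k) x fD z
      set m1 := p k x * (1 - b k x) with hm1d
      set m2 := p k x * b k x * (1 - b k x) with hm2d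
      rw [Real.dist_eq] at h3 h4
      have hd : dist ((u1, u2), (m1, m2))
          ((q * (1 - β), q * β * (1 - β)), (q * (1 - β), q * β * (1 - β))) < δ := by
        simp only [Prod.dist_eq, Real.dist_eq]
        have a1 := abs_sub_le u1 m1 (q * (1 - β))
        have a2 := abs_sub_le u2 m2 (q * β * (1 - β))
        refine max_lt (max_lt ?_ ?_) (max_lt ?_ ?_) <;> linarith
      have hb1 := hball hd
      simp only [Prod.mk_sub_mk] at hb1
      rw [gfun_val a c h7 h8] at hb1
      simp only [add_apply, smul_apply,
        ContinuousLinearMap.coe_fst', ContinuousLinearMap.coe_snd', smul_eq_mul,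
        Real.norm_eq_abs, Prod.norm_def] at hb1
      have hlt : n k * max |u1 - m1| |u2 - m2| < M := by
        rcases max_choice |u1 - m1| |u2 - m2| with h | h <;> rw [h] <;> assumption
      have : η ≤ η / 2 := by
        refine le_trans hz ?_
        rw [← mul_sub, abs_mul, abs_of_pos h9]
        calc _ ≤ n k * (η / (2 * M) * max |u1 - m1| |u2 - m2|) :=
              mul_le_mul_of_nonneg_left hb1 h9.le
          _ = η / (2 * M) * (n k * max |u1 - m1| |u2 - m2|) := by ring
          _ ≤ η / (2 * M) * M := mul_le_mul_of_nonneg_left hlt.le (by positivity)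
          _ = η / 2 := by field_simp
      linarith
    · refine lt_of_le_of_lt (measureReal_union_le _ _) ?_
      have w1 := measureReal_union_le (μ := arrMeas (cl k) (p k) (b k))
        {z | δ / 2 ≤ |avg (cl k) x fY z - p k x * (1 - b k x)|}
        {z | δ / 2 ≤ |avg (cl k) x fD z - p k x * b k x * (1 - b k x)|}
      have w2 := measureReal_union_le (μ := arrMeas (cl k) (p k) (b k))
        {z | M ≤ n k * |avg (cl k) x fY z - p k x * (1 - b k x)|}
        {z | M ≤ n k * |avg (cl k) x fD z - p k x * b k x * (1 - b k x)|}
      linarith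
  obtain ⟨K, hK⟩ := eventually_atTop.1 key
  exact ⟨K, fun k hk => hK k hk.le⟩

/-- Sums of null sequences are null. -/
lemma TP_sum {J : Type} [DecidableEq J] {Z : ℕ → Type} [∀ k, MeasurableSpace (Z k)]
    {ν : ∀ k, Measure (Z k)}
    (hν : ∀ k, IsProbabilityMeasure (ν k)) (s : Finset J) (X : J → ∀ k, Z k → ℝ)
    (h : ∀ x, TP ν (X x)) : TP ν (fun k z => ∑ x ∈ s, X x k z) := by
  induction s using Finset.induction_on with
  | empty =>
    intro ε hε
    simp [not_le.2 hε]
  | insert x s hx ih =>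
    intro ε hε
    have h1 := (h x (ε / 2) (by positivity)).add (ih (ε / 2) (by positivity))
    rw [add_zero] at h1
    refine tendsto_of_tendsto_of_tendsto_of_le_of_le tendsto_const_nhds h1
      (fun k => measureReal_nonneg) ?_
    intro k
    have := hν k
    refine (measureReal_mono (s₂ := {z | ε / 2 ≤ |X x k z|} ∪
      {z | ε / 2 ≤ |∑ x ∈ s, X x k z|}) ?_).trans (measureReal_union_le _ _)
    intro z hz
    by_contra hcon
    simp only [Set.mem_union, Set.mem_ofPred_eq, not_or, not_le] at hcon hz
    rw [Finset.sum_insert hx] at hz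
    have := abs_add_le (X x k z) (∑ x ∈ s, X x k z)
    linarith [hcon.1, hcon.2]

/-- Null perturbations do not change limits of characteristic functions. -/
lemma charFun_perturb {Z : ℕ → Type} [∀ k, Finite (Z k)] [∀ k, MeasurableSpace (Z k)]
    [∀ k, DiscreteMeasurableSpace (Z k)] {ν : ∀ k, Measure (Z k)}
    (hν : ∀ k, IsProbabilityMeasure (ν k)) {T L : ∀ k, Z k → ℝ}
    (h : TP ν (fun k z => T k z - L k z)) (s : ℝ) {ℓ : ℂ}
    (hL : Tendsto (fun k => ∫ z, Complex.exp ((s * L k z : ℝ) * Complex.I) ∂(ν k)) atTop (nhds ℓ)) :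
    Tendsto (fun k => ∫ z, Complex.exp ((s * T k z : ℝ) * Complex.I) ∂(ν k)) atTop (nhds ℓ) := by
  have hdiff : Tendsto (fun k => ∫ z, Complex.exp ((s * T k z : ℝ) * Complex.I) ∂(ν k)
      - ∫ z, Complex.exp ((s * L k z : ℝ) * Complex.I) ∂(ν k)) atTop (nhds 0) := by
    rw [Metric.tendsto_nhds]
    intro e he
    set ε := e / (4 * (|s| + 1)) with hε
    have hεpos : 0 < ε := by positivity
    filter_upwards [(h ε hεpos).eventually (gt_mem_nhds (show (0 : ℝ) < e / 4 by positivity))]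
      with k hk
    have := hν k
    rw [dist_zero_right, ← integral_sub Integrable.of_finite Integrable.of_finite]
    have hpt : ∀ z, ‖Complex.exp ((s * T k z : ℝ) * Complex.I)
        - Complex.exp ((s * L k z : ℝ) * Complex.I)‖ ≤
        |s| * ε + Set.indicator {z | ε ≤ |T k z - L k z|} (fun _ => (2 : ℝ)) z := by
      intro z
      by_cases hz : ε ≤ |T k z - L k z|
      · rw [Set.indicator_of_mem (by exact hz)]
        refine (norm_sub_le _ _).trans ?_
        rw [Complex.norm_exp_ofReal_mul_I, Complex.norm_exp_ofReal_mul_I]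
        have : 0 ≤ |s| * ε := by positivity
        linarith
      · rw [Set.indicator_of_notMem (by exact hz), add_zero]
        have hfac : Complex.exp ((s * T k z : ℝ) * Complex.I)
            - Complex.exp ((s * L k z : ℝ) * Complex.I)
            = Complex.exp ((s * L k z : ℝ) * Complex.I) *
              (Complex.exp (Complex.I * (s * (T k z - L k z) : ℝ)) - 1) := by
          rw [mul_sub, mul_one, ← Complex.exp_add]
          congr 2
          push_cast; ring
        rw [hfac, norm_mul, Complex.norm_exp_ofReal_mul_I, one_mul]
        refine (Real.norm_exp_I_mul_ofReal_sub_one_le).trans ?_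
        rw [Real.norm_eq_abs, abs_mul]
        exact mul_le_mul_of_nonneg_left (not_le.1 hz).le (abs_nonneg _)
    calc _ ≤ ∫ z, ‖Complex.exp ((s * T k z : ℝ) * Complex.I)
        - Complex.exp ((s * L k z : ℝ) * Complex.I)‖ ∂(ν k) := norm_integral_le_integral_norm _
      _ ≤ ∫ z, (|s| * ε + Set.indicator {z | ε ≤ |T k z - L k z|} (fun _ => (2 : ℝ)) z) ∂(ν k) :=
          integral_mono Integrable.of_finite Integrable.of_finite hpt
      _ = |s| * ε + (ν k).real {z | ε ≤ |T k z - L k z|} * 2 := by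
          rw [integral_add Integrable.of_finite Integrable.of_finite,
            integral_indicator_const _ (MeasurableSet.of_discrete)]
          simp
      _ < e := by
          have : |s| * ε ≤ e / 4 := by
            rw [hε, mul_div_assoc', div_le_div_iff₀ (by positivity) (by norm_num)]
            nlinarith [abs_nonneg s]
          linarith
  have := hdiff.add hL
  rw [zero_add] at this
  refine this.congr fun k => by ring

/-! ### Part 4: conditional central limit theorem -/

/-- Limit of the characteristic functions of one class. -/
lemma class_charFun {p b : ℕ → ℝ} {q β : ℝ}
    (hp : ∀ k, p k ∈ Set.Icc (0 : ℝ) 1) (hb : ∀ k, b k ∈ Set.Icc (0 : ℝ) 1)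
    (hpq : Tendsto p atTop (nhds q)) (hbβ : Tendsto b atTop (nhds β))
    {N : ℕ → ℕ} (hN : Tendsto (fun k => (N k : ℝ)) atTop atTop)
    {n : ℕ → ℝ} {ρ : ℝ}
    (hρ : Tendsto (fun k => n k ^ 2 / N k) atTop (nhds ρ)) (α γ s : ℝ) :
    Tendsto (fun k => (∫ z, Complex.exp ((s * (n k / N k) * xi (p k) (b k) α γ z : ℝ) * Complex.I)
      ∂(eMeas (p k) (b k))) ^ (N k)) atTop
      (nhds (Complex.exp ((-(s ^ 2 / 2 * (ρ * xiVar q β α γ)) : ℝ)))) := by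
  set φ : ℕ → ℂ := fun k => ∫ z, Complex.exp ((s * (n k / N k) * xi (p k) (b k) α γ z : ℝ)
    * Complex.I) ∂(eMeas (p k) (b k)) with hφ
  have hinv : Tendsto (fun k => ((N k : ℝ))⁻¹) atTop (nhds 0) := tendsto_inv_atTop_zero.comp hN
  have hpos : ∀ᶠ k in atTop, (1 : ℝ) ≤ N k := hN.eventually_ge_atTop 1
  have hr2 : Tendsto (fun k => (n k / N k) ^ 2) atTop (nhds 0) := by
    have := hρ.mul hinv
    rw [mul_zero] at this
    refine this.congr fun k => ?_
    rw [div_pow, sq (N k : ℝ)]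
    ring
  have hr : Tendsto (fun k => |s * (n k / N k)|) atTop (nhds 0) := by
    have h1 : Tendsto (fun k => |s| * Real.sqrt ((n k / N k) ^ 2)) atTop (nhds (|s| * Real.sqrt 0)) :=
      ((Real.continuous_sqrt.tendsto 0).comp hr2).const_mul _
    rw [Real.sqrt_zero, mul_zero] at h1
    refine h1.congr fun k => ?_
    rw [Real.sqrt_sq_eq_abs, abs_mul]
  have hv : Tendsto (fun k => xiVar (p k) (b k) α γ) atTop (nhds (xiVar q β α γ)) := by
    simp only [xiVar_eq]
    have hm1 := hpq.mul (hbβ.const_sub 1)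
    have hm2 := (hpq.mul hbβ).mul (hbβ.const_sub 1)
    exact (((hm1.sub (hm1.pow 2)).const_mul _).add
      (((hm2.div_const 2).sub (hm2.pow 2)).const_mul _)).add
      (((hm2.div_const 2).sub (hm1.mul hm2)).const_mul _)
  have hmain : Tendsto (fun k => (N k : ℂ) * (φ k - 1)) atTop
      (nhds ((-(s ^ 2 / 2 * (ρ * xiVar q β α γ)) : ℝ))) := by
    have h1 : Tendsto (fun k => ((-(s ^ 2 / 2 * ((n k ^ 2 / N k) * xiVar (p k) (b k) α γ)) : ℝ) : ℂ))
        atTop (nhds ((-(s ^ 2 / 2 * (ρ * xiVar q β α γ)) : ℝ))) :=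
      (Complex.continuous_ofReal.tendsto _).comp (((hρ.mul hv).const_mul _).neg)
    have h2 : Tendsto (fun k => (N k : ℂ) * (φ k - (1 - ((s * (n k / N k)) ^ 2
        * xiVar (p k) (b k) α γ / 2 : ℝ)))) atTop (nhds 0) := by
      rw [tendsto_zero_iff_norm_tendsto_zero]
      have hub : Tendsto (fun k => (s ^ 2 * (|α| + |γ|) ^ 3 * (n k ^ 2 / N k))
          * |s * (n k / N k)|) atTop (nhds 0) := by
        simpa using (hρ.const_mul (s ^ 2 * (|α| + |γ|) ^ 3)).mul hr
      refine tendsto_of_tendsto_of_tendsto_of_le_of_le' tendsto_const_nhds hub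
        (Eventually.of_forall fun k => norm_nonneg _) ?_
      have hsmall : ∀ᶠ k in atTop, |s * (n k / N k)| * (|α| + |γ|) < 1 := by
        have := hr.mul_const (|α| + |γ|)
        rw [zero_mul] at this
        exact this.eventually (gt_mem_nhds one_pos)
      filter_upwards [hsmall, hpos] with k hk hNk
      have hB := xi_charFun_bound (hp k) (hb k) α γ (s * (n k / N k)) hk.le
      rw [norm_mul, Complex.norm_natCast]
      refine (mul_le_mul_of_nonneg_left hB (by positivity)).trans (le_of_eq ?_)
      have hsq : |s * (n k / N k)| ^ 3 = (s * (n k / N k)) ^ 2 * |s * (n k / N k)| := by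
        rw [pow_succ, sq_abs]
      rw [mul_pow, hsq]
      have : (N k : ℝ) ≠ 0 := by linarith
      field_simp
    have h3 := h2.add h1
    rw [zero_add] at h3
    refine h3.congr' ?_
    filter_upwards [hpos] with k hNk
    have : (N k : ℂ) ≠ 0 := by
      have : (N k : ℝ) ≠ 0 := by linarith
      exact_mod_cast this
    push_cast
    field_simp
    ring
  have := sbm_pow_tendsto hN hmain
  simp only [add_sub_cancel] at this
  exact this

/-- Limiting asymptotic variance form of one class. -/
def Qf (q β a c : ℝ) : ℝ := xiVar q β (alph q β a c) (gamm q β a c)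

/-- Conditional central limit theorem, in terms of characteristic functions. -/
theorem cond_clt {J : Type} [Fintype J] [DecidableEq J] {ι : ℕ → Type} [∀ k, Fintype (ι k)]
    {cl : ∀ k, ι k → J} {p b : ℕ → J → ℝ}
    (hp : ∀ k x, p k x ∈ Set.Icc (0 : ℝ) 1) (hb : ∀ k x, b k x ∈ Set.Icc (0 : ℝ) 1)
    {q β : ℝ} (hq0 : q ≠ 0) (hβ1 : β ≠ 1)
    (hpq : ∀ x, Tendsto (fun k => p k x) atTop (nhds q))
    (hbβ : ∀ x, Tendsto (fun k => b k x) atTop (nhds β))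
    (hN : ∀ x, Tendsto (fun k => (clN (cl k) x : ℝ)) atTop atTop)
    {n : ℕ → ℝ} (hn : ∀ᶠ k in atTop, 0 < n k) {ρ : J → ℝ}
    (hρ : ∀ x, Tendsto (fun k => n k ^ 2 / clN (cl k) x) atTop (nhds (ρ x))) (a c : J → ℝ)
    (s : ℝ) :
    Tendsto (fun k => ∫ z, Complex.exp ((s * (∑ x, n k * (gfun (a x) (c x)
        (avg (cl k) x fY z, avg (cl k) x fD z) - (a x * p k x + c x * b k x))) : ℝ) * Complex.I)
        ∂(arrMeas (cl k) (p k) (b k))) atTop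
      (nhds (Complex.exp ((-(s ^ 2 / 2 * ∑ x, ρ x * Qf q β (a x) (c x)) : ℝ)))) := by
  have hprob : ∀ k, IsProbabilityMeasure (arrMeas (cl k) (p k) (b k)) :=
    fun k => arrMeas_isProb (hp k) (hb k)
  refine charFun_perturb hprob (L := fun k z => ∑ x, n k *
    (alph q β (a x) (c x) * (avg (cl k) x fY z - p k x * (1 - b k x))
      + gamm q β (a x) (c x) * (avg (cl k) x fD z - p k x * b k x * (1 - b k x)))) ?_ s ?_
  · have := TP_sum hprob Finset.univ _
      (fun x => arr_linear hp hb hq0 hβ1 (hpq x) (hbβ x) (hN x) hn (hρ x) (a x) (c x))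
    intro ε hε
    have h2 := this ε hε
    simp only [Finset.sum_sub_distrib] at h2
    exact h2
  · have hlim := tendsto_finsetProd Finset.univ (fun x (_ : x ∈ Finset.univ) =>
      class_charFun (fun k => hp k x) (fun k => hb k x) (hpq x) (hbβ x) (hN x) (hρ x)
        (alph q β (a x) (c x)) (gamm q β (a x) (c x)) s)
    have hlimval : ∏ x, Complex.exp ((-(s ^ 2 / 2 * (ρ x *
        xiVar q β (alph q β (a x) (c x)) (gamm q β (a x) (c x)))) : ℝ))
        = Complex.exp ((-(s ^ 2 / 2 * ∑ x, ρ x * Qf q β (a x) (c x)) : ℝ)) := by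
      rw [← Complex.exp_sum, ← Complex.ofReal_sum, Finset.sum_neg_distrib, ← Finset.mul_sum]
      rfl
    rw [hlimval] at hlim
    refine hlim.congr' ?_
    have hpos : ∀ᶠ k in atTop, ∀ x, (1 : ℝ) ≤ clN (cl k) x :=
      eventually_all.2 fun x => (hN x).eventually_ge_atTop 1
    filter_upwards [hpos] with k hk
    have hLeq : ∀ z : ι k → Bool × Bool × Bool, ∑ x, n k *
        (alph q β (a x) (c x) * (avg (cl k) x fY z - p k x * (1 - b k x))
        + gamm q β (a x) (c x) * (avg (cl k) x fD z - p k x * b k x * (1 - b k x)))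
        = ∑ i, (n k / clN (cl k) (cl k i)) * xi (p k (cl k i)) (b k (cl k i))
            (alph q β (a (cl k i)) (c (cl k i))) (gamm q β (a (cl k i)) (c (cl k i))) (z i) := by
      intro z
      rw [← Finset.sum_fiberwise (s := Finset.univ) (g := cl k)]
      refine Finset.sum_congr rfl fun x _ => ?_
      have hx : (clN (cl k) x : ℝ) ≠ 0 := by have := hk x; linarith
      have e1 : ∑ i with cl k i = x, (n k / clN (cl k) (cl k i)) *
            xi (p k (cl k i)) (b k (cl k i))
            (alph q β (a (cl k i)) (c (cl k i))) (gamm q β (a (cl k i)) (c (cl k i))) (z i)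
          = ∑ i with cl k i = x, (n k / clN (cl k) x) * xi (p k x) (b k x)
            (alph q β (a x) (c x)) (gamm q β (a x) (c x)) (z i) := by
        refine Finset.sum_congr rfl fun i hi => ?_
        rw [(Finset.mem_filter.1 hi).2]
      rw [e1, ← Finset.mul_sum]
      simp only [xi]
      rw [Finset.sum_add_distrib, ← Finset.mul_sum, ← Finset.mul_sum, Finset.sum_sub_distrib,
        Finset.sum_sub_distrib, Finset.sum_const, Finset.sum_const]
      have e2 : #{i | cl k i = x} = clN (cl k) x := rfl
      rw [e2]
      simp only [avg, nsmul_eq_mul]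
      field_simp
    have hexpo : ∀ z : ι k → Bool × Bool × Bool, Complex.exp ((s * (∑ x, n k *
        (alph q β (a x) (c x) * (avg (cl k) x fY z - p k x * (1 - b k x))
        + gamm q β (a x) (c x) * (avg (cl k) x fD z - p k x * b k x * (1 - b k x)))) : ℝ)
          * Complex.I)
        = ∏ i, Complex.exp ((s * (n k / clN (cl k) (cl k i)) * xi (p k (cl k i)) (b k (cl k i))
            (alph q β (a (cl k i)) (c (cl k i))) (gamm q β (a (cl k i)) (c (cl k i))) (z i) : ℝ)
          * Complex.I) := by
      intro z
      rw [hLeq z, ← Complex.exp_sum, ← Finset.sum_mul, ← Complex.ofReal_sum, Finset.mul_sum]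
      simp only [mul_assoc]
    have hPr : ∀ i, IsProbabilityMeasure (eMeas (p k (cl k i)) (b k (cl k i))) :=
      fun i => eMeas_isProb (hp _ _) (hb _ _)
    simp_rw [hexpo]
    rw [arrMeas, integral_fintype_prod_eq_prod (μ := fun i => eMeas (p k (cl k i)) (b k (cl k i)))
      (f := fun i w => Complex.exp ((s * (n k / clN (cl k) (cl k i)) *
        xi (p k (cl k i)) (b k (cl k i)) (alph q β (a (cl k i)) (c (cl k i)))
        (gamm q β (a (cl k i)) (c (cl k i))) w : ℝ) * Complex.I))]
    rw [← Finset.prod_fiberwise (s := Finset.univ) (g := cl k)]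
    refine Finset.prod_congr rfl fun x _ => ?_
    have e1 : ∀ i ∈ Finset.univ.filter (fun i => cl k i = x),
        (∫ w, Complex.exp ((s * (n k / clN (cl k) (cl k i)) *
        xi (p k (cl k i)) (b k (cl k i)) (alph q β (a (cl k i)) (c (cl k i)))
        (gamm q β (a (cl k i)) (c (cl k i))) w : ℝ) * Complex.I) ∂(eMeas (p k (cl k i)) (b k (cl k i))))
        = ∫ w, Complex.exp ((s * (n k / clN (cl k) x) *
        xi (p k x) (b k x) (alph q β (a x) (c x))
        (gamm q β (a x) (c x)) w : ℝ) * Complex.I) ∂(eMeas (p k x) (b k x)) := by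
      intro i hi
      rw [(Finset.mem_filter.1 hi).2]
    rw [Finset.prod_congr rfl e1, Finset.prod_const]
    rfl

/-! ### Part 5: the limit covariance, cumulative distribution functions -/

lemma Qf_quad (q β a c : ℝ) : Qf q β a c = Qf q β 1 0 * a ^ 2
    + (Qf q β 1 1 - Qf q β 1 0 - Qf q β 0 1) * (a * c) + Qf q β 0 1 * c ^ 2 := by
  simp only [Qf, xiVar_eq, alph, gamm]
  ring

lemma Qf_nonneg {q β : ℝ} (hq0 : 0 < q) (hq1 : q < 1) (hβ0 : 0 < β) (hβ1 : β < 1) (a c : ℝ) :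
    0 ≤ Qf q β a c := by
  unfold Qf xiVar
  exact Finset.sum_nonneg fun z _ => mul_nonneg
    (eMass_nonneg ⟨hq0.le, hq1.le⟩ ⟨hβ0.le, hβ1.le⟩ z) (sq_nonneg _)

lemma Qf_eq_zero {q β : ℝ} (hq0 : 0 < q) (hq1 : q < 1) (hβ0 : 0 < β) (hβ1 : β < 1) {a c : ℝ}
    (h : Qf q β a c = 0) : a = 0 ∧ c = 0 := by
  have hz : ∀ z, eMass q β z * xi q β (alph q β a c) (gamm q β a c) z ^ 2 = 0 := by
    unfold Qf xiVar at h
    have := (Finset.sum_eq_zero_iff_of_nonneg (fun z _ => mul_nonneg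
      (eMass_nonneg ⟨hq0.le, hq1.le⟩ ⟨hβ0.le, hβ1.le⟩ z) (sq_nonneg _))).1 h
    exact fun z => this z (Finset.mem_univ z)
  have h1b : 0 < 1 - β := by linarith
  have z1 := hz (true, true, true)
  have z2 := hz (true, true, false)
  have z3 := hz (true, false, true)
  have e1 : xi q β (alph q β a c) (gamm q β a c) (true, true, true) = 0 := by
    have : eMass q β (true, true, true) ≠ 0 := by simp [eMass]; constructor <;> linarith
    exact pow_eq_zero_iff (two_ne_zero) |>.1 ((mul_eq_zero.1 z1).resolve_left this)
  have e2 : xi q β (alph q β a c) (gamm q β a c) (true, true, false) = 0 := by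
    have : eMass q β (true, true, false) ≠ 0 := by
      simp [eMass]; exact ⟨⟨by linarith, by linarith⟩, by linarith⟩
    exact pow_eq_zero_iff (two_ne_zero) |>.1 ((mul_eq_zero.1 z2).resolve_left this)
  have e3 : xi q β (alph q β a c) (gamm q β a c) (true, false, true) = 0 := by
    have : eMass q β (true, false, true) ≠ 0 := by
      simp [eMass]; exact ⟨⟨by linarith, by linarith⟩, by linarith⟩
    exact pow_eq_zero_iff (two_ne_zero) |>.1 ((mul_eq_zero.1 z3).resolve_left this)
  simp only [xi, fY, fD] at e1 e2 e3
  simp at e1 e2 e3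
  have hγ : gamm q β a c = 0 := by linarith
  have hα : alph q β a c = 0 := by
    rw [hγ] at e2 e3; linarith
  have hsum : alph q β a c + β * gamm q β a c = a / (1 - β) := by
    simp only [alph, gamm]; field_simp; ring
  rw [hγ, hα] at hsum
  have ha : a = 0 := by
    have : a / (1 - β) = 0 := by linarith
    exact (div_eq_zero_iff.1 this).resolve_right h1b.ne'
  refine ⟨ha, ?_⟩
  rw [gamm, ha] at hγ
  simp at hγ
  rcases hγ with h | h | h <;> linarith

/-- Limit variance of the linear combination with coefficients `t`. -/
def limVar (q β : ℝ) (ρ : Fin 3 → ℝ) (t : Fin 4 → ℝ) : ℝ :=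
  ρ 0 * Qf q β (t 0) (-t 2) + ρ 1 * Qf q β (t 1) (-t 3)
    + ρ 2 * Qf q β (-(t 0 + t 1)) (t 2 + t 3)

lemma limVar_pos {q β : ℝ} (hq0 : 0 < q) (hq1 : q < 1) (hβ0 : 0 < β) (hβ1 : β < 1)
    {ρ : Fin 3 → ℝ} (hρ : ∀ x, 0 < ρ x) {t : Fin 4 → ℝ} (ht : t ≠ 0) :
    0 < limVar q β ρ t := by
  have n0 := Qf_nonneg hq0 hq1 hβ0 hβ1 (t 0) (-t 2)
  have n1 := Qf_nonneg hq0 hq1 hβ0 hβ1 (t 1) (-t 3)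
  have n2 := Qf_nonneg hq0 hq1 hβ0 hβ1 (-(t 0 + t 1)) (t 2 + t 3)
  have m0 := mul_nonneg (hρ 0).le n0
  have m1 := mul_nonneg (hρ 1).le n1
  have m2 := mul_nonneg (hρ 2).le n2
  rcases (add_nonneg (add_nonneg m0 m1) m2).lt_or_eq with h | h
  · exact h
  · exfalso
    have z0 : ρ 0 * Qf q β (t 0) (-t 2) = 0 := by linarith
    have z1 : ρ 1 * Qf q β (t 1) (-t 3) = 0 := by linarith
    have q0 := Qf_eq_zero hq0 hq1 hβ0 hβ1 ((mul_eq_zero.1 z0).resolve_left (hρ 0).ne')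
    have q1 := Qf_eq_zero hq0 hq1 hβ0 hβ1 ((mul_eq_zero.1 z1).resolve_left (hρ 1).ne')
    apply ht
    ext i
    fin_cases i
    · exact q0.1
    · exact q1.1
    · simpa using q0.2
    · simpa using q1.2

/-- The limit covariance matrix. -/
def sigMat (A B C r0 r1 r2 : ℝ) : Matrix (Fin 4) (Fin 4) ℝ :=
  !![(r0 + r2) * A, r2 * A, -((r0 + r2) * B), -(r2 * B);
     r2 * A, (r1 + r2) * A, -(r2 * B), -((r1 + r2) * B);
     -((r0 + r2) * B), -(r2 * B), (r0 + r2) * C, r2 * C;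
     -(r2 * B), -((r1 + r2) * B), r2 * C, (r1 + r2) * C]

/-- The limit covariance matrix of the model. -/
def sigModel (q β : ℝ) (ρ : Fin 3 → ℝ) : Matrix (Fin 4) (Fin 4) ℝ :=
  sigMat (Qf q β 1 0) ((Qf q β 1 1 - Qf q β 1 0 - Qf q β 0 1) / 2) (Qf q β 0 1) (ρ 0) (ρ 1) (ρ 2)

lemma quadForm_sigModel (q β : ℝ) (ρ : Fin 3 → ℝ) (t : Fin 4 → ℝ) :
    quadForm4 (sigModel q β ρ) t = limVar q β ρ t := by
  rw [limVar, Qf_quad q β (t 0), Qf_quad q β (t 1), Qf_quad q β (-(t 0 + t 1))]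
  simp [quadForm4, sigModel, sigMat, Fin.sum_univ_four]
  ring

lemma sigModel_posDef {q β : ℝ} (hq0 : 0 < q) (hq1 : q < 1) (hβ0 : 0 < β) (hβ1 : β < 1)
    {ρ : Fin 3 → ℝ} (hρ : ∀ x, 0 < ρ x) : (sigModel q β ρ).PosDef := by
  rw [Matrix.posDef_iff_dotProduct_mulVec]
  refine ⟨?_, fun {t} ht => ?_⟩
  · ext i j
    fin_cases i <;> fin_cases j <;> simp [sigModel, sigMat]
  · have h := limVar_pos hq0 hq1 hβ0 hβ1 hρ ht
    rw [← quadForm_sigModel] at h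
    have e : dotProduct (star t) (Matrix.mulVec (sigModel q β ρ) t)
        = quadForm4 (sigModel q β ρ) t := by
      simp [quadForm4, dotProduct, Matrix.mulVec, Finset.mul_sum, mul_assoc]
    rw [e]
    exact h

/-- From characteristic functions to distribution functions. -/
lemma cdf_of_charFun {Z : ℕ → Type} [∀ k, Finite (Z k)] [∀ k, MeasurableSpace (Z k)]
    [∀ k, DiscreteMeasurableSpace (Z k)] {ν : ∀ k, Measure (Z k)}
    (hν : ∀ k, IsProbabilityMeasure (ν k)) {T : ∀ k, Z k → ℝ} {V : ℝ} (hV : 0 < V)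
    (h : ∀ s : ℝ, Tendsto (fun k => ∫ z, Complex.exp ((s * T k z : ℝ) * Complex.I) ∂(ν k)) atTop
      (nhds (Complex.exp ((-(s ^ 2 / 2 * V) : ℝ))))) (x : ℝ) :
    Tendsto (fun k => (ν k).real {z | T k z ≤ x}) atTop
      (nhds ((gaussianReal 0 V.toNNReal (Set.Iic x)).toReal)) := by
  have hT : ∀ k, Measurable (T k) := fun k => Measurable.of_discrete
  have hpm : ∀ k, IsProbabilityMeasure ((ν k).map (T k)) :=
    fun k => Measure.isProbabilityMeasure_map (hT k).aemeasurable
  set μs : ℕ → ProbabilityMeasure ℝ := fun k => ⟨(ν k).map (T k), hpm k⟩ with hμs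
  set μ₀ : ProbabilityMeasure ℝ := ⟨gaussianReal 0 V.toNNReal, inferInstance⟩ with hμ₀
  have hconv : Tendsto μs atTop (nhds μ₀) := by
    rw [ProbabilityMeasure.tendsto_iff_tendsto_charFun]
    intro s
    have e0 : charFun (μ₀ : Measure ℝ) s = Complex.exp ((-(s ^ 2 / 2 * V) : ℝ)) := by
      change charFun (gaussianReal 0 V.toNNReal) s = _
      rw [charFun_gaussianReal]
      congr 1
      have : ((V.toNNReal : ℝ) : ℂ) = (V : ℂ) := by rw [Real.coe_toNNReal V hV.le]
      rw [this]
      push_cast; ring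
    rw [e0]
    refine (h s).congr fun k => ?_
    change _ = charFun ((ν k).map (T k)) s
    rw [charFun_apply_real, integral_map (hT k).aemeasurable (by fun_prop)]
    congr 1
    ext z
    push_cast
    rfl
  have hne : V.toNNReal ≠ 0 := by
    simpa using hV
  have := nullSingletonClass_gaussianReal (μ := 0) hne
  have hfr : (μ₀ : Measure ℝ) (frontier (Set.Iic x)) = 0 := by
    rw [frontier_Iic]
    change gaussianReal 0 V.toNNReal {x} = 0
    exact measure_singleton x
  have hlim := ProbabilityMeasure.tendsto_measure_of_null_frontier_of_tendsto' hconv hfr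
  have hlim2 := (ENNReal.tendsto_toReal (measure_ne_top (μ₀ : Measure ℝ) (Set.Iic x))).comp hlim
  refine hlim2.congr fun k => ?_
  change ((ν k).map (T k) (Set.Iic x)).toReal = _
  rw [Measure.map_apply (hT k) measurableSet_Iic]
  rfl

/-! ### Part 6: pair combinatorics -/

/-- Unordered pairs. -/
abbrev Prs (n : ℕ) : Type := {p : Fin n × Fin n // p.1 < p.2}

/-- Class of a pair. -/
def cls3 {n : ℕ} (l : Fin n → Bool) (p : Prs n) : Fin 3 :=
  if l p.1.1 then (if l p.1.2 then 0 else 2) else (if l p.1.2 then 2 else 1)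

/-- Size of the first group. -/
def n1 {n : ℕ} (l : Fin n → Bool) : ℕ := #{i | l i = true}

lemma sum_prs {n : ℕ} (F : Fin n → Fin n → ℝ) :
    ∑ p : Prs n, F p.1.1 p.1.2 = ∑ i, ∑ j, if i < j then F i j else 0 := by
  rw [← Fintype.sum_prod_type' (fun i j => if i < j then F i j else 0), ← Finset.sum_filter]
  exact (Finset.sum_subtype (p := fun p : Fin n × Fin n => p.1 < p.2) _ (by simp)
    (fun p => F p.1 p.2)).symm

lemma sum_symm_pairs {n : ℕ} (F : Fin n → Fin n → ℝ) (hF : ∀ i j, F i j = F j i) :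
    ∑ i, ∑ j, F i j = 2 * ∑ p : Prs n, F p.1.1 p.1.2 + ∑ i, F i i := by
  have h1 : ∀ i j, F i j = (if i < j then F i j else 0) + (if j < i then F j i else 0)
      + (if i = j then F i j else 0) := by
    intro i j
    rcases lt_trichotomy i j with h | h | h
    · simp [h, h.not_gt, h.ne]
    · simp [h]
    · simp [h, h.not_gt, h.ne', hF i j]
  have h2 : ∑ i, ∑ j, F i j = ∑ i, ∑ j, ((if i < j then F i j else 0)
      + (if j < i then F j i else 0) + (if i = j then F i j else 0)) :=
    Finset.sum_congr rfl fun i _ => Finset.sum_congr rfl fun j _ => h1 i j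
  rw [h2]
  simp only [Finset.sum_add_distrib]
  rw [sum_prs, Finset.sum_comm (f := fun i j => if j < i then F j i else 0)]
  simp
  ring

lemma clN_real {n : ℕ} (l : Fin n → Bool) (x : Fin 3) :
    (clN (cls3 l) x : ℝ) = ∑ p : Prs n, if cls3 l p = x then (1 : ℝ) else 0 := by
  simp [clN]

lemma n1_real {n : ℕ} (l : Fin n → Bool) :
    (n1 l : ℝ) = ∑ i, if l i then (1 : ℝ) else 0 := by
  simp [n1]

lemma n1c_real {n : ℕ} (l : Fin n → Bool) :
    (n : ℝ) - n1 l = ∑ i, if l i then (0 : ℝ) else 1 := by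
  have : (n : ℝ) = ∑ i : Fin n, (1 : ℝ) := by simp
  rw [n1_real, this, ← Finset.sum_sub_distrib]
  refine Finset.sum_congr rfl fun i _ => ?_
  cases l i <;> simp

lemma clN_zero {n : ℕ} (l : Fin n → Bool) :
    (clN (cls3 l) 0 : ℝ) = ((n1 l : ℝ) ^ 2 - n1 l) / 2 := by
  have h := sum_symm_pairs (fun i j => (if l i then (1 : ℝ) else 0) * (if l j then (1 : ℝ) else 0))
    (fun i j => mul_comm _ _)
  have e : ∀ i, (if l i then (1 : ℝ) else 0) * (if l i then (1 : ℝ) else 0)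
      = if l i then (1 : ℝ) else 0 := fun i => by cases l i <;> simp
  simp only [e] at h
  rw [← Finset.sum_mul_sum, ← n1_real] at h
  have h2 : ∑ p : Prs n, (if l p.1.1 then (1 : ℝ) else 0) * (if l p.1.2 then (1 : ℝ) else 0)
      = clN (cls3 l) 0 := by
    rw [clN_real]
    refine Finset.sum_congr rfl fun p _ => ?_
    unfold cls3
    cases l p.1.1 <;> cases l p.1.2 <;> simp
  rw [h2] at h
  linarith

lemma clN_one {n : ℕ} (l : Fin n → Bool) :
    (clN (cls3 l) 1 : ℝ) = (((n : ℝ) - n1 l) ^ 2 - ((n : ℝ) - n1 l)) / 2 := by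
  have h := sum_symm_pairs (fun i j => (if l i then (0 : ℝ) else 1) * (if l j then (0 : ℝ) else 1))
    (fun i j => mul_comm _ _)
  have e : ∀ i, (if l i then (0 : ℝ) else 1) * (if l i then (0 : ℝ) else 1)
      = if l i then (0 : ℝ) else 1 := fun i => by cases l i <;> simp
  simp only [e] at h
  rw [← Finset.sum_mul_sum, ← n1c_real] at h
  have h2 : ∑ p : Prs n, (if l p.1.1 then (0 : ℝ) else 1) * (if l p.1.2 then (0 : ℝ) else 1)
      = clN (cls3 l) 1 := by
    rw [clN_real]
    refine Finset.sum_congr rfl fun p _ => ?_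
    unfold cls3
    cases l p.1.1 <;> cases l p.1.2 <;> simp
  rw [h2] at h
  linarith

lemma clN_two {n : ℕ} (l : Fin n → Bool) :
    (clN (cls3 l) 2 : ℝ) = n1 l * ((n : ℝ) - n1 l) := by
  have h := sum_symm_pairs (fun i j => (if l i then (1 : ℝ) else 0) * (if l j then (0 : ℝ) else 1)
    + (if l i then (0 : ℝ) else 1) * (if l j then (1 : ℝ) else 0))
    (fun i j => by ring)
  have e : ∀ i, (if l i then (1 : ℝ) else 0) * (if l i then (0 : ℝ) else 1)
      + (if l i then (0 : ℝ) else 1) * (if l i then (1 : ℝ) else 0)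
      = 0 := fun i => by cases l i <;> simp
  simp only [e] at h
  simp only [Finset.sum_add_distrib] at h
  rw [← Finset.sum_mul_sum, ← Finset.sum_mul_sum, ← n1_real, ← n1c_real,
    ← Finset.sum_add_distrib] at h
  have h2 : ∑ p : Prs n, ((if l p.1.1 then (1 : ℝ) else 0) * (if l p.1.2 then (0 : ℝ) else 1)
      + (if l p.1.1 then (0 : ℝ) else 1) * (if l p.1.2 then (1 : ℝ) else 0))
      = clN (cls3 l) 2 := by
    rw [clN_real]
    refine Finset.sum_congr rfl fun p _ => ?_
    unfold cls3
    cases l p.1.1 <;> cases l p.1.2 <;> simp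
  rw [h2] at h
  simp at h
  linarith

/-- Labels of arbitrary size. -/
abbrev Lab : Type := Σ n : ℕ, (Fin n → Bool)

/-- The filter of large, balanced label configurations. -/
def labF (κ : ℝ) : Filter Lab :=
  comap (fun x : Lab => x.1) atTop ⊓ comap (fun x : Lab => (n1 x.2 : ℝ) / x.1) (nhds κ)

instance (κ : ℝ) : (labF κ).IsCountablyGenerated := by
  unfold labF; infer_instance

/-- Limits of `n ^ 2 / N_x`. -/
def rhoL (κ : ℝ) : Fin 3 → ℝ := ![2 / κ ^ 2, 2 / (1 - κ) ^ 2, 1 / (κ * (1 - κ))]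

lemma rhoL_pos {κ : ℝ} (h0 : 0 < κ) (h1 : κ < 1) (x : Fin 3) : 0 < rhoL κ x := by
  have : 0 < 1 - κ := by linarith
  fin_cases x <;> simp [rhoL] <;> positivity

lemma labF_size {κ : ℝ} : Tendsto (fun x : Lab => x.1) (labF κ) atTop :=
  tendsto_comap.mono_left inf_le_left

lemma labF_ratio {κ : ℝ} : Tendsto (fun x : Lab => (n1 x.2 : ℝ) / x.1) (labF κ) (nhds κ) :=
  tendsto_comap.mono_left inf_le_right

lemma labF_clN {κ : ℝ} (x : Fin 3) :
    Tendsto (fun u : Lab => (clN (cls3 u.2) x : ℝ) / (u.1 : ℝ) ^ 2) (labF κ)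
      (nhds ((rhoL κ x)⁻¹)) := by
  have hn : Tendsto (fun u : Lab => (u.1 : ℝ)) (labF κ) atTop :=
    tendsto_natCast_atTop_atTop.comp labF_size
  have hi : Tendsto (fun u : Lab => (u.1 : ℝ)⁻¹) (labF κ) (nhds 0) :=
    tendsto_inv_atTop_zero.comp hn
  have hr := labF_ratio (κ := κ)
  have hr' : Tendsto (fun u : Lab => 1 - (n1 u.2 : ℝ) / u.1) (labF κ) (nhds (1 - κ)) :=
    tendsto_const_nhds.sub hr
  fin_cases x
  · have := (((hr.pow 2).sub (hr.mul hi)).div_const 2)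
    refine (this.congr' ?_).trans (by simp [rhoL])
    filter_upwards [hn.eventually_gt_atTop 0] with u hu
    simp only [Fin.zero_eta, clN_zero]
    field_simp
  · have := (((hr'.pow 2).sub (hr'.mul hi)).div_const 2)
    refine (this.congr' ?_).trans (by simp [rhoL])
    filter_upwards [hn.eventually_gt_atTop 0] with u hu
    simp only [Fin.mk_one, clN_one]
    field_simp
  · have := hr.mul hr'
    refine (this.congr' ?_).trans (by simp [rhoL])
    filter_upwards [hn.eventually_gt_atTop 0] with u hu
    simp only [Fin.reduceFinMk, clN_two]
    field_simp

lemma labF_rho {κ : ℝ} (h0 : 0 < κ) (h1 : κ < 1) (x : Fin 3) :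
    Tendsto (fun u : Lab => (u.1 : ℝ) ^ 2 / (clN (cls3 u.2) x : ℝ)) (labF κ)
      (nhds (rhoL κ x)) := by
  have := (labF_clN (κ := κ) x).inv₀ (inv_ne_zero (rhoL_pos h0 h1 x).ne')
  rw [inv_inv] at this
  refine this.congr fun u => ?_
  rw [inv_div]

lemma labF_clN_atTop {κ : ℝ} (h0 : 0 < κ) (h1 : κ < 1) (x : Fin 3) :
    Tendsto (fun u : Lab => (clN (cls3 u.2) x : ℝ)) (labF κ) atTop := by
  have hn : Tendsto (fun u : Lab => (u.1 : ℝ)) (labF κ) atTop :=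
    tendsto_natCast_atTop_atTop.comp labF_size
  have h2 : Tendsto (fun u : Lab => (u.1 : ℝ) ^ 2) (labF κ) atTop :=
    (tendsto_pow_atTop two_ne_zero).comp hn
  have := (labF_clN (κ := κ) x).pos_mul_atTop (inv_pos.2 (rhoL_pos h0 h1 x)) h2
  refine this.congr' ?_
  filter_upwards [hn.eventually_gt_atTop 0] with u hu
  field_simp

/-- Truncation to the unit interval. -/
def clamp (x : ℝ) : ℝ := max 0 (min 1 x)

lemma clamp_mem (x : ℝ) : clamp x ∈ Set.Icc (0 : ℝ) 1 :=
  ⟨le_max_left _ _, max_le zero_le_one (min_le_left _ _)⟩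

lemma clamp_eq {x : ℝ} (h : x ∈ Set.Icc (0 : ℝ) 1) : clamp x = x := by
  simp [clamp, h.1, h.2]

/-- Class parameters, truncated to the unit interval. -/
def par (q m₁ m₂ : ℝ) (n : ℕ) : Fin 3 → ℝ :=
  ![clamp (q + m₁ / Real.sqrt n), clamp (q + m₂ / Real.sqrt n), clamp q]

lemma par_mem (q m₁ m₂ : ℝ) (n : ℕ) (x : Fin 3) : par q m₁ m₂ n x ∈ Set.Icc (0 : ℝ) 1 := by
  fin_cases x <;> exact clamp_mem _

lemma par_lim_aux (q m : ℝ) :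
    Tendsto (fun n : ℕ => q + m / Real.sqrt n) atTop (nhds q) := by
  have : Tendsto (fun n : ℕ => Real.sqrt (n : ℝ)) atTop atTop :=
    Real.tendsto_sqrt_atTop.comp tendsto_natCast_atTop_atTop
  simpa using (tendsto_const_nhds (x := q)).add ((tendsto_const_nhds (x := m)).div_atTop this)

lemma par_eventually {q m₁ m₂ : ℝ} (h0 : 0 < q) (h1 : q < 1) : ∀ᶠ n : ℕ in atTop,
    (q + m₁ / Real.sqrt n ∈ Set.Icc (0 : ℝ) 1 ∧ q + m₂ / Real.sqrt n ∈ Set.Icc (0 : ℝ) 1) ∧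
    par q m₁ m₂ n = ![q + m₁ / Real.sqrt n, q + m₂ / Real.sqrt n, q] := by
  filter_upwards [(par_lim_aux q m₁).eventually (Icc_mem_nhds h0 h1),
    (par_lim_aux q m₂).eventually (Icc_mem_nhds h0 h1)] with n hn1 hn2
  refine ⟨⟨hn1, hn2⟩, ?_⟩
  rw [par, clamp_eq hn1, clamp_eq hn2, clamp_eq ⟨h0.le, h1.le⟩]

lemma par_lim {q m₁ m₂ : ℝ} (h0 : 0 < q) (h1 : q < 1) (x : Fin 3) :
    Tendsto (fun n : ℕ => par q m₁ m₂ n x) atTop (nhds q) := by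
  have : Tendsto (fun n : ℕ => (![q + m₁ / Real.sqrt n, q + m₂ / Real.sqrt n, q] : Fin 3 → ℝ) x)
      atTop (nhds q) := by
    fin_cases x
    · exact par_lim_aux q m₁
    · exact par_lim_aux q m₂
    · exact tendsto_const_nhds
  refine this.congr' ?_
  filter_upwards [par_eventually (m₁ := m₁) (m₂ := m₂) h0 h1] with n hn
  rw [hn.2]

/-- The linear combination statistic written with class averages. -/
def Tstat (a c : Fin 3 → ℝ) (p b : Fin 3 → ℝ) {n : ℕ} (l : Fin n → Bool)
    (z : Prs n → Bool × Bool × Bool) : ℝ :=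
  ∑ x, (n : ℝ) * (gfun (a x) (c x) (avg (cls3 l) x fY z, avg (cls3 l) x fD z)
    - (a x * p x + c x * b x))

/-- Coefficients. -/
def aC (t : Fin 4 → ℝ) : Fin 3 → ℝ := ![t 0, t 1, -(t 0 + t 1)]

/-- Coefficients. -/
def cC (t : Fin 4 → ℝ) : Fin 3 → ℝ := ![-t 2, -t 3, t 2 + t 3]

lemma lab_cdf {κ q β m₁ m₂ g₁ g₂ : ℝ} (hκ0 : 0 < κ) (hκ1 : κ < 1) (hq0 : 0 < q) (hq1 : q < 1)
    (hβ0 : 0 < β) (hβ1 : β < 1) {t : Fin 4 → ℝ} (ht : t ≠ 0) (x : ℝ) :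
    Tendsto (fun u : Lab => (arrMeas (cls3 u.2) (par q m₁ m₂ u.1) (par β g₁ g₂ u.1)).real
      {z | Tstat (aC t) (cC t) (par q m₁ m₂ u.1) (par β g₁ g₂ u.1) u.2 z ≤ x}) (labF κ)
      (nhds ((gaussianReal 0 (limVar q β (rhoL κ) t).toNNReal (Set.Iic x)).toReal)) := by
  refine tendsto_of_seq_tendsto fun u hu => ?_
  have hs : Tendsto (fun k => (u k).1) atTop atTop := labF_size.comp hu
  refine cdf_of_charFun (ν := fun k => arrMeas (cls3 (u k).2) (par q m₁ m₂ (u k).1)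
      (par β g₁ g₂ (u k).1))
    (T := fun k z => Tstat (aC t) (cC t) (par q m₁ m₂ (u k).1) (par β g₁ g₂ (u k).1) (u k).2 z)
    (fun k => arrMeas_isProb (par_mem _ _ _ _) (par_mem _ _ _ _))
    (limVar_pos hq0 hq1 hβ0 hβ1 (rhoL_pos hκ0 hκ1) ht) (fun s => ?_) x
  have h := cond_clt (cl := fun k => cls3 (u k).2) (p := fun k => par q m₁ m₂ (u k).1)
    (b := fun k => par β g₁ g₂ (u k).1)
    (fun k => par_mem _ _ _ _) (fun k => par_mem _ _ _ _) hq0.ne' hβ1.ne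
    (fun x => (par_lim hq0 hq1 x).comp hs) (fun x => (par_lim hβ0 hβ1 x).comp hs)
    (fun x => (labF_clN_atTop hκ0 hκ1 x).comp hu) (n := fun k => ((u k).1 : ℝ))
    ((tendsto_natCast_atTop_atTop.comp hs).eventually_gt_atTop 0) (ρ := rhoL κ)
    (fun x => (labF_rho hκ0 hκ1 x).comp hu) (aC t) (cC t) s
  have e : ∑ x, rhoL κ x * Qf q β (aC t x) (cC t x) = limVar q β (rhoL κ) t := by
    simp [Fin.sum_univ_three, limVar, aC, cC]
  rw [e] at h
  exact h

lemma lab_agree {κ q β m₁ m₂ g₁ g₂ : ℝ} (hκ0 : 0 < κ) (hκ1 : κ < 1) (hq0 : 0 < q) (hq1 : q < 1)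
    (hβ0 : 0 < β) (hβ1 : β < 1) :
    Tendsto (fun u : Lab => (arrMeas (cls3 u.2) (par q m₁ m₂ u.1) (par β g₁ g₂ u.1)).real
      {z | ∀ p, (z p).2.1 = (z p).2.2}) (labF κ) (nhds 0) := by
  refine tendsto_of_seq_tendsto fun u hu => ?_
  have hs : Tendsto (fun k => (u k).1) atTop atTop := labF_size.comp hu
  have h := arr_consistent (cl := fun k => cls3 (u k).2) (p := fun k => par q m₁ m₂ (u k).1)
    (b := fun k => par β g₁ g₂ (u k).1) (x := 2)
    (fun k => par_mem _ _ _ _) (fun k => par_mem _ _ _ _) fD_mem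
    (fun k => fD_mean (par_mem _ _ _ _ _) (par_mem _ _ _ _ _))
    ((labF_clN_atTop hκ0 hκ1 2).comp hu)
  have hlim : Tendsto (fun k => par q m₁ m₂ (u k).1 2 * par β g₁ g₂ (u k).1 2
      * (1 - par β g₁ g₂ (u k).1 2)) atTop (nhds (q * β * (1 - β))) :=
    (((par_lim hq0 hq1 2).comp hs).mul ((par_lim hβ0 hβ1 2).comp hs)).mul
      (tendsto_const_nhds.sub ((par_lim hβ0 hβ1 2).comp hs))
  have hpos : 0 < q * β * (1 - β) := by
    have : 0 < 1 - β := by linarith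
    positivity
  have h2 := h (q * β * (1 - β) / 2) (by positivity)
  refine tendsto_of_tendsto_of_tendsto_of_le_of_le' tendsto_const_nhds h2
    (Eventually.of_forall fun _ => measureReal_nonneg) ?_
  filter_upwards [hlim.eventually (lt_mem_nhds (show q * β * (1 - β) / 2 < _ by linarith))]
    with k hk
  have := arrMeas_isProb (cl := cls3 (u k).2) (par_mem q m₁ m₂ (u k).1) (par_mem β g₁ g₂ (u k).1)
  refine measureReal_mono fun z hz => ?_
  have h0 : avg (cls3 (u k).2) 2 fD z = 0 := by
    have : ∀ p, fD (z p) = 0 := fun p => by simp [fD, hz p]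
    simp [avg, this]
  simp only [Set.mem_ofPred_eq, h0]
  rw [zero_sub, abs_neg]
  exact hk.le.trans (le_abs_self _)
/-! ### Part 7: averaging over labels -/

lemma eMeas_obs {κ : ℝ} (h : κ ∈ Set.Icc (0 : ℝ) 1) (b : Bool) :
    eMeas κ 0 {w | w.2.1 = b} = ENNReal.ofReal (if b then κ else 1 - κ) := by
  have h1 : 0 ≤ 1 - κ := by linarith [h.2]
  rw [eMeas, Measure.finsetSum_apply, sum_bool3]
  cases b <;> simp [eMass]

lemma labelMass_nonneg {κ : ℝ} (h : κ ∈ Set.Icc (0 : ℝ) 1) {n : ℕ} (l : Fin n → Bool) :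
    0 ≤ labelMass κ l := by
  refine Finset.prod_nonneg fun i _ => ?_
  split_ifs
  · exact h.1
  · linarith [h.2]

lemma labelMass_sum (κ : ℝ) (n : ℕ) : ∑ l : Fin n → Bool, labelMass κ l = 1 := by
  unfold labelMass
  have := Finset.prod_univ_sum (fun _ : Fin n => (Finset.univ : Finset Bool))
    (fun _ b => if b then κ else 1 - κ)
  rw [Fintype.piFinset_univ] at this
  rw [← this]
  simp

lemma lab_law {κ : ℝ} (h : κ ∈ Set.Icc (0 : ℝ) 1) {n : ℕ} (s : Finset (Fin n → Bool)) :
    (arrMeas (fun _ : Fin n => ()) (fun _ => κ) (fun _ => 0)).real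
      {z | (fun i => (z i).2.1) ∈ s} = ∑ l ∈ s, labelMass κ l := by
  have hpr := arrMeas_isProb (cl := fun _ : Fin n => ()) (p := fun _ => κ) (b := fun _ => 0)
    (fun _ => h) (fun _ => ⟨le_rfl, zero_le_one⟩)
  have hpr' : IsProbabilityMeasure (eMeas κ 0) := eMeas_isProb h ⟨le_rfl, zero_le_one⟩
  have h1 := sum_measureReal_preimage_singleton
    (μ := arrMeas (fun _ : Fin n => ()) (fun _ => κ) (fun _ => 0)) s
    (f := fun (z : Fin n → Bool × Bool × Bool) i => (z i).2.1)
    (fun _ _ => MeasurableSet.of_discrete)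
  have h2 : {z : Fin n → Bool × Bool × Bool | (fun i => (z i).2.1) ∈ s}
      = (fun (z : Fin n → Bool × Bool × Bool) i => (z i).2.1) ⁻¹' (s : Set (Fin n → Bool)) := rfl
  rw [h2, ← h1]
  refine Finset.sum_congr rfl fun l _ => ?_
  have h3 : (fun (z : Fin n → Bool × Bool × Bool) i => (z i).2.1) ⁻¹' {l}
      = Set.univ.pi fun i => {w : Bool × Bool × Bool | w.2.1 = l i} := by
    ext z
    simp [funext_iff]
  have hnn : ∀ i, 0 ≤ (if l i then κ else 1 - κ) := by
    intro i
    split_ifs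
    · exact h.1
    · linarith [h.2]
  rw [h3, measureReal_def, arrMeas, Measure.pi_pi]
  simp only [eMeas_obs h]
  rw [← ENNReal.ofReal_prod_of_nonneg (fun i _ => hnn i), ENNReal.toReal_ofReal]
  · rfl
  · exact Finset.prod_nonneg fun i _ => hnn i

lemma lab_weak_law {κ : ℝ} (h : κ ∈ Set.Icc (0 : ℝ) 1) {n : ℕ} (hn : 0 < n) {δ : ℝ} (hδ : 0 < δ) :
    ∑ l : Fin n → Bool with δ ≤ |(n1 l : ℝ) / n - κ|, labelMass κ l ≤ 1 / (n * δ ^ 2) := by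
  rw [← lab_law h]
  have hN : clN (fun _ : Fin n => ()) () = n := by simp [clN]
  have := arr_cheb (cl := fun _ : Fin n => ()) (p := fun _ => κ) (b := fun _ => 0)
    (fun _ => h) (fun _ => ⟨le_rfl, zero_le_one⟩) fY_mem (x := ())
    (fY_mean h ⟨le_rfl, zero_le_one⟩) hδ (by rw [hN]; exact hn)
  rw [hN] at this
  refine le_trans (le_of_eq ?_) this
  congr 1
  ext z
  rw [Set.mem_ofPred_eq, Finset.mem_filter]
  simp [avg, hN, fY, n1]

lemma lab_average {κ : ℝ} (h : κ ∈ Set.Icc (0 : ℝ) 1) {F : Lab → ℝ} {L : ℝ}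
    (hF : ∀ u, F u ∈ Set.Icc (0 : ℝ) 1) (hL : Tendsto F (labF κ) (nhds L)) :
    Tendsto (fun n : ℕ => ∑ l : Fin n → Bool, labelMass κ l * F ⟨n, l⟩) atTop (nhds L) := by
  rw [Metric.tendsto_nhds]
  intro ε hε
  have h1 : ∀ᶠ u in labF κ, |F u - L| < ε / 2 := by
    have := (Metric.tendsto_nhds.1 hL) (ε / 2) (by positivity)
    simpa [Real.dist_eq] using this
  obtain ⟨s, hs, t, ht, hst⟩ := Filter.mem_inf_iff_superset.1 h1
  obtain ⟨s', hs', hss⟩ := mem_comap.1 hs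
  obtain ⟨t', ht', htt⟩ := mem_comap.1 ht
  obtain ⟨N, hN⟩ := mem_atTop_sets.1 hs'
  obtain ⟨δ, hδ, hball⟩ := Metric.mem_nhds_iff.1 ht'
  have hgood : ∀ n ≥ N, ∀ l : Fin n → Bool, ¬ δ ≤ |(n1 l : ℝ) / n - κ| → |F ⟨n, l⟩ - L| < ε / 2 := by
    intro n hn l hl
    refine hst ⟨hss (hN n hn), htt (hball ?_)⟩
    rw [Metric.mem_ball, Real.dist_eq]
    exact not_le.1 hl
  set C : ℝ := 1 + |L| with hC
  have hCpos : 0 < C := by positivity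
  have hlim : Tendsto (fun n : ℕ => C * (1 / ((n : ℝ) * δ ^ 2))) atTop (nhds 0) := by
    have h2 : Tendsto (fun n : ℕ => (n : ℝ) * δ ^ 2) atTop atTop :=
      tendsto_natCast_atTop_atTop.atTop_mul_const (by positivity)
    have h3 := tendsto_inv_atTop_zero.comp h2
    have := h3.const_mul C
    rw [mul_zero] at this
    simpa [Function.comp_def, one_div] using this
  filter_upwards [hlim.eventually (gt_mem_nhds (show (0 : ℝ) < ε / 2 by positivity)),
    eventually_ge_atTop N, eventually_gt_atTop 0] with n hn1 hn2 hn3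
  rw [Real.dist_eq]
  have e1 : ∑ l : Fin n → Bool, labelMass κ l * F ⟨n, l⟩ - L
      = ∑ l : Fin n → Bool, labelMass κ l * (F ⟨n, l⟩ - L) := by
    simp only [mul_sub, Finset.sum_sub_distrib, ← Finset.sum_mul, labelMass_sum, one_mul]
  have e2 : ∀ l : Fin n → Bool, |labelMass κ l * (F ⟨n, l⟩ - L)| ≤ labelMass κ l * (ε / 2)
      + C * (if δ ≤ |(n1 l : ℝ) / n - κ| then labelMass κ l else 0) := by
    intro l
    have hm := labelMass_nonneg h l
    rw [abs_mul, abs_of_nonneg hm]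
    split_ifs with hb
    · have h4 : |F ⟨n, l⟩ - L| ≤ C := by
        refine (abs_sub _ _).trans ?_
        have := hF ⟨n, l⟩
        rw [abs_of_nonneg this.1]
        linarith [this.2]
      have := mul_le_mul_of_nonneg_left h4 hm
      have h5 : 0 ≤ labelMass κ l * (ε / 2) := by positivity
      linarith
    · have := mul_le_mul_of_nonneg_left (hgood n hn2 l hb).le hm
      simpa using this
  calc |∑ l : Fin n → Bool, labelMass κ l * F ⟨n, l⟩ - L|
      ≤ ∑ l : Fin n → Bool, |labelMass κ l * (F ⟨n, l⟩ - L)| := by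
        rw [e1]; exact Finset.abs_sum_le_sum_abs _ _
    _ ≤ ∑ l : Fin n → Bool, (labelMass κ l * (ε / 2)
      + C * (if δ ≤ |(n1 l : ℝ) / n - κ| then labelMass κ l else 0)) :=
        Finset.sum_le_sum fun l _ => e2 l
    _ = ε / 2 + C * ∑ l : Fin n → Bool with δ ≤ |(n1 l : ℝ) / n - κ|, labelMass κ l := by
        rw [Finset.sum_add_distrib, ← Finset.sum_mul, labelMass_sum, one_mul, ← Finset.mul_sum,
          Finset.sum_filter]
    _ ≤ ε / 2 + C * (1 / (n * δ ^ 2)) := by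
        gcongr
        exact lab_weak_law h hn3 hδ
    _ < ε := by linarith

/-! ### Part 8: laws of finitely valued maps without measurability -/

lemma fin_law {Ω K : Type} [MeasurableSpace Ω] [Fintype K] {P : Measure Ω}
    [IsProbabilityMeasure P] {X : Ω → K} {m : K → ℝ}
    (hX : ∀ k, P.real (X ⁻¹' {k}) = m k) (hm : ∑ k, m k = 1) (S : Set K) [DecidablePred (· ∈ S)] :
    P.real (X ⁻¹' S) = ∑ k with k ∈ S, m k := by
  have hle : ∀ s : Finset K, P.real (X ⁻¹' (s : Set K)) ≤ ∑ k ∈ s, m k := by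
    intro s
    have h1 : X ⁻¹' (s : Set K) = ⋃ k ∈ s, X ⁻¹' {k} := by
      ext ω; simp
    rw [h1]
    refine (measureReal_biUnion_finset_le s _).trans (le_of_eq ?_)
    exact Finset.sum_congr rfl fun k _ => hX k
  have a1 := hle {k | k ∈ S}
  have a2 := hle {k | k ∉ S}
  have a3 : P.real (X ⁻¹' S ∪ X ⁻¹' Sᶜ) ≤ P.real (X ⁻¹' S) + P.real (X ⁻¹' Sᶜ) :=
    measureReal_union_le _ _
  rw [← Set.preimage_union, Set.union_compl_self, Set.preimage_univ, probReal_univ] at a3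
  have c1 : ((({k | k ∈ S} : Finset K)) : Set K) = S := by ext; simp
  have c2 : ((({k | k ∉ S} : Finset K)) : Set K) = Sᶜ := by ext; simp
  rw [c1] at a1
  rw [c2] at a2
  have := Finset.sum_filter_add_sum_filter_not Finset.univ (· ∈ S) m
  rw [hm] at this
  linarith

lemma nullMeas_of_add {Ω : Type} [MeasurableSpace Ω] {P : Measure Ω}
    [IsProbabilityMeasure P] {E : Set Ω} (h : P.real E + P.real Eᶜ = 1) :
    NullMeasurableSet E P := by
  set H := toMeasurable P E with hH
  set H' := toMeasurable P Eᶜ with hH'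
  have mH : MeasurableSet H := measurableSet_toMeasurable _ _
  have mH' : MeasurableSet H' := measurableSet_toMeasurable _ _
  have s1 : E ⊆ H := subset_toMeasurable _ _
  have s2 : Eᶜ ⊆ H' := subset_toMeasurable _ _
  have r1 : P.real H = P.real E := by simp [measureReal_def, hH, measure_toMeasurable]
  have r2 : P.real H' = P.real Eᶜ := by simp [measureReal_def, hH', measure_toMeasurable]
  have hun : H ∪ H' = Set.univ := by
    rw [Set.eq_univ_iff_forall]
    intro ω
    by_cases hω : ω ∈ E
    · exact Or.inl (s1 hω)
    · exact Or.inr (s2 hω)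
  have h3 := measureReal_union_add_inter (μ := P) (s := H) mH'
  rw [hun, probReal_univ, r1, r2, h] at h3
  have h4 : P.real (H ∩ H') = 0 := by linarith
  have h5 : P (H ∩ H') = 0 := by
    rwa [measureReal_eq_zero_iff] at h4
  have h6 : E =ᵐ[P] H := by
    refine s1.eventuallyLE.antisymm ?_
    rw [ae_le_set]
    refine measure_mono_null ?_ h5
    rintro ω ⟨h7, h8⟩
    exact ⟨h7, s2 h8⟩
  exact mH.nullMeasurableSet.congr h6.symm

lemma fin_nullMeas {Ω K : Type} [MeasurableSpace Ω] [Fintype K] {P : Measure Ω}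
    [IsProbabilityMeasure P] {X : Ω → K} {m : K → ℝ}
    (hX : ∀ k, P.real (X ⁻¹' {k}) = m k) (hm : ∑ k, m k = 1) (S : Set K) :
    NullMeasurableSet (X ⁻¹' S) P := by
  classical
  refine nullMeas_of_add ?_
  rw [← Set.preimage_compl, fin_law hX hm S, fin_law hX hm Sᶜ]
  have := Finset.sum_filter_add_sum_filter_not Finset.univ (· ∈ S) m
  rw [hm] at this
  simpa using this
/-! ### Part 9: the law of the model -/

/-- Symmetric loopless extension. -/
def symExt {n : ℕ} (f : Prs n → Bool) (i j : Fin n) : Bool :=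
  if h : i < j then f ⟨(i, j), h⟩ else if h : j < i then f ⟨(j, i), h⟩ else false

lemma symExt_symm {n : ℕ} (f : Prs n → Bool) (i j : Fin n) : symExt f i j = symExt f j i := by
  unfold symExt
  rcases lt_trichotomy i j with h | h | h
  · simp [h, h.not_gt]
  · simp [h]
  · simp [h, h.not_gt]

lemma symExt_loopless {n : ℕ} (f : Prs n → Bool) (i : Fin n) : symExt f i i = false := by
  simp [symExt]

lemma symExt_apply {n : ℕ} (f : Prs n → Bool) (p : Prs n) : symExt f p.1.1 p.1.2 = f p := by
  simp [symExt, p.2]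

lemma eq_symExt {n : ℕ} {M : Fin n → Fin n → Bool} (h1 : ∀ i j, M i j = M j i)
    (h2 : ∀ i, M i i = false) (f : Prs n → Bool) :
    M = symExt f ↔ ∀ p : Prs n, M p.1.1 p.1.2 = f p := by
  constructor
  · rintro h p
    rw [h, symExt_apply]
  · intro h
    ext i j
    rcases lt_trichotomy i j with hij | hij | hij
    · rw [symExt, dif_pos hij, ← h ⟨(i, j), hij⟩]
    · subst hij; rw [h2, symExt_loopless]
    · rw [h1, symExt_symm, symExt, dif_pos hij, ← h ⟨(j, i), hij⟩]

/-- The pair array of a configuration. -/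
def zArr {n : ℕ} (a y y' : Fin n → Fin n → Bool) (p : Prs n) : Bool × Bool × Bool :=
  (a p.1.1 p.1.2, y p.1.1 p.1.2, y' p.1.1 p.1.2)

lemma prod_prs {n : ℕ} (F : Fin n × Fin n → ℝ) :
    ∏ p ∈ Finset.univ.filter (fun p : Fin n × Fin n => p.1 < p.2), F p = ∏ p : Prs n, F p.1 :=
  Finset.prod_subtype (p := fun p : Fin n × Fin n => p.1 < p.2) _ (by simp) F

lemma sbmB_cls3 {n : ℕ} (x₁ x₂ xb : ℝ) (l : Fin n → Bool) (p : Prs n) :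
    sbmB x₁ x₂ xb (l p.1.1) (l p.1.2) = (![x₁, x₂, xb] : Fin 3 → ℝ) (cls3 l p) := by
  unfold sbmB cls3
  cases l p.1.1 <;> cases l p.1.2 <;> simp

lemma mass_eq {n : ℕ} (x₁ x₂ xb y₁ y₂ yb : ℝ) (l : Fin n → Bool)
    (z : Prs n → Bool × Bool × Bool) :
    edgeMass (sbmB x₁ x₂ xb) l (symExt fun p => (z p).1)
      * obsMass (sbmB y₁ y₂ yb) l (symExt fun p => (z p).1) (symExt fun p => (z p).2.1)
      * obsMass (sbmB y₁ y₂ yb) l (symExt fun p => (z p).1) (symExt fun p => (z p).2.2)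
    = ∏ p, eMass ((![x₁, x₂, xb] : Fin 3 → ℝ) (cls3 l p)) ((![y₁, y₂, yb] : Fin 3 → ℝ) (cls3 l p))
        (z p) := by
  simp only [edgeMass, obsMass, prod_prs, symExt_apply, sbmB_cls3]
  rw [← Finset.prod_mul_distrib, ← Finset.prod_mul_distrib]
  rfl

lemma arr_real {ι J : Type} [Fintype ι] [DecidableEq ι] {cl : ι → J} {p b : J → ℝ}
    (hp : ∀ x, p x ∈ Set.Icc (0 : ℝ) 1) (hb : ∀ x, b x ∈ Set.Icc (0 : ℝ) 1)
    (S : Finset (ι → Bool × Bool × Bool)) :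
    (arrMeas cl p b).real (S : Set (ι → Bool × Bool × Bool))
      = ∑ z ∈ S, ∏ i, eMass (p (cl i)) (b (cl i)) (z i) := by
  have := arrMeas_isProb (cl := cl) hp hb
  have hPr : ∀ i, IsProbabilityMeasure (eMeas (p (cl i)) (b (cl i))) :=
    fun i => eMeas_isProb (hp _) (hb _)
  rw [← sum_measureReal_singleton]
  refine Finset.sum_congr rfl fun z _ => ?_
  have h1 : ({z} : Set (ι → Bool × Bool × Bool)) = Set.univ.pi fun i => {z i} := by
    rw [Set.univ_pi_singleton]
  rw [h1, measureReal_def, arrMeas, Measure.pi_pi]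
  simp only [eMeas_singleton]
  rw [← ENNReal.ofReal_prod_of_nonneg (fun i _ => eMass_nonneg (hp _) (hb _) _),
    ENNReal.toReal_ofReal]
  exact Finset.prod_nonneg fun i _ => eMass_nonneg (hp _) (hb _) _

/-- The law of the model, for arbitrary events of the finite configuration. -/
lemma sbm_law {Ω : Type} [MeasurableSpace Ω] {P : Measure Ω} {n : ℕ} {κ : ℝ}
    (hκ : κ ∈ Set.Icc (0 : ℝ) 1) {x₁ x₂ xb y₁ y₂ yb : ℝ} {p b : Fin 3 → ℝ}
    (hp : ∀ x, p x ∈ Set.Icc (0 : ℝ) 1) (hb : ∀ x, b x ∈ Set.Icc (0 : ℝ) 1)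
    (hpe : p = ![x₁, x₂, xb]) (hbe : b = ![y₁, y₂, yb])
    {c : Ω → Fin n → Bool} {A Y Y' : Ω → Fin n → Fin n → Bool}
    (h : IsObsSBM P n (sbmB x₁ x₂ xb) (sbmB y₁ y₂ yb) κ c A Y Y')
    (S : (Fin n → Bool) → Set (Prs n → Bool × Bool × Bool)) :
    P.real {ω | zArr (A ω) (Y ω) (Y' ω) ∈ S (c ω)}
      = ∑ l, labelMass κ l * (arrMeas (cls3 l) p b).real (S l) ∧
    NullMeasurableSet {ω | zArr (A ω) (Y ω) (Y' ω) ∈ S (c ω)} P := by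
  classical
  have hP := h.isProb
  set X : Ω → (Fin n → Bool) × (Prs n → Bool × Bool × Bool) :=
    fun ω => (c ω, zArr (A ω) (Y ω) (Y' ω)) with hXdef
  set m : (Fin n → Bool) × (Prs n → Bool × Bool × Bool) → ℝ :=
    fun k => labelMass κ k.1 * ∏ i, eMass (p (cls3 k.1 i)) (b (cls3 k.1 i)) (k.2 i) with hmdef
  have hmnn : ∀ k, 0 ≤ m k := fun k => mul_nonneg (labelMass_nonneg hκ _)
    (Finset.prod_nonneg fun i _ => eMass_nonneg (hp _) (hb _) _)
  have hX : ∀ k, P.real (X ⁻¹' {k}) = m k := by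
    rintro ⟨l, z⟩
    have hlaw := h.law l (symExt fun p => (z p).1) (symExt fun p => (z p).2.1)
      (symExt fun p => (z p).2.2) (symExt_symm _) (symExt_loopless _) (symExt_symm _)
      (symExt_loopless _) (symExt_symm _) (symExt_loopless _)
    have hset : X ⁻¹' {(l, z)} = {ω | c ω = l ∧ A ω = symExt (fun p => (z p).1)
        ∧ Y ω = symExt (fun p => (z p).2.1) ∧ Y' ω = symExt (fun p => (z p).2.2)} := by
      ext ω
      rw [Set.mem_ofPred_eq,
        eq_symExt (h.symmA ω) (h.looplessA ω), eq_symExt (h.symmY ω) (h.looplessY ω),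
        eq_symExt (h.symmY' ω) (h.looplessY' ω)]
      have hx : ω ∈ X ⁻¹' {(l, z)} ↔ c ω = l ∧ ∀ p, zArr (A ω) (Y ω) (Y' ω) p = z p := by
        rw [← funext_iff, ← Prod.mk.injEq]
        rfl
      rw [hx]
      simp only [zArr, Prod.ext_iff]
      constructor
      · rintro ⟨h1, h2⟩
        exact ⟨h1, fun p => (h2 p).1, fun p => (h2 p).2.1, fun p => (h2 p).2.2⟩
      · rintro ⟨h1, h2, h3, h4⟩
        exact ⟨h1, fun p => ⟨h2 p, h3 p, h4 p⟩⟩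
    rw [hset, measureReal_def, hlaw, mul_assoc, mul_assoc, ← mul_assoc (edgeMass _ _ _), mass_eq,
      ← hpe, ← hbe]
    exact ENNReal.toReal_ofReal (hmnn (l, z))
  have hsum : ∀ S' : (Fin n → Bool) → Set (Prs n → Bool × Bool × Bool),
      ∑ k with k ∈ {k : (Fin n → Bool) × (Prs n → Bool × Bool × Bool) | k.2 ∈ S' k.1}, m k
        = ∑ l, labelMass κ l * (arrMeas (cls3 l) p b).real (S' l) := by
    intro S'
    rw [Finset.sum_filter, Fintype.sum_prod_type]
    refine Finset.sum_congr rfl fun l _ => ?_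
    have := arr_real (cl := cls3 l) hp hb ({z | z ∈ S' l} : Finset _)
    have e : ((({z | z ∈ S' l} : Finset (Prs n → Bool × Bool × Bool))) : Set _) = S' l := by
      ext; simp
    rw [e] at this
    rw [this, Finset.mul_sum, Finset.sum_filter]
    rfl
  have hm : ∑ k, m k = 1 := by
    have h1 := hsum (fun _ => Set.univ)
    have h2 : ∀ l : Fin n → Bool, (arrMeas (cls3 l) p b).real Set.univ = 1 := fun l => by
      have := arrMeas_isProb (cl := cls3 l) hp hb
      exact probReal_univ
    simp only [h2, mul_one, labelMass_sum] at h1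
    simpa using h1
  have hset : {ω | zArr (A ω) (Y ω) (Y' ω) ∈ S (c ω)} = X ⁻¹' {k | k.2 ∈ S k.1} := rfl
  rw [hset]
  exact ⟨(fin_law hX hm _).trans (hsum S), fin_nullMeas hX hm _⟩

/-! ### Part 10: the statistic -/

lemma pairCard_eq {n : ℕ} (sel : Fin n → Fin n → Bool) :
    pairCard sel = ∑ p : Prs n, if sel p.1.1 p.1.2 then (1 : ℝ) else 0 := by
  rw [sum_prs (fun i j => if sel i j then (1 : ℝ) else 0), pairCard, Finset.card_filter,
    Fintype.sum_prod_type]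
  push_cast
  refine Finset.sum_congr rfl fun i _ => Finset.sum_congr rfl fun j _ => ?_
  by_cases h : i < j <;> simp [h]

/-- Selector of a class. -/
def selC {n : ℕ} (l : Fin n → Bool) : Fin 3 → Fin n → Fin n → Bool :=
  ![within1 l, within2 l, between l]

lemma selC_iff {n : ℕ} (l : Fin n → Bool) (x : Fin 3) (p : Prs n) :
    selC l x p.1.1 p.1.2 = true ↔ cls3 l p = x := by
  unfold selC cls3
  fin_cases x <;> cases h1 : l p.1.1 <;> cases h2 : l p.1.2 <;>
    simp [within1, within2, between, h1, h2]

lemma pairCard_selC {n : ℕ} (l : Fin n → Bool) (x : Fin 3) :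
    pairCard (selC l x) = clN (cls3 l) x := by
  rw [pairCard_eq, clN_real]
  simp only [selC_iff]

lemma u1hat_eq {n : ℕ} (l : Fin n → Bool) (x : Fin 3) (a y y' : Fin n → Fin n → Bool) :
    u1hat (selC l x) y = avg (cls3 l) x fY (zArr a y y') := by
  rw [u1hat, avg, pairCard_selC, pairCard_eq, Finset.sum_filter]
  congr 1
  refine Finset.sum_congr rfl fun p _ => ?_
  simp only [Bool.and_eq_true, selC_iff, fY, zArr]
  by_cases h : cls3 l p = x <;> rcases Bool.eq_false_or_eq_true (y p.1.1 p.1.2) with hy | hy <;>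
    simp [h, hy]

lemma u2hat_eq {n : ℕ} (l : Fin n → Bool) (x : Fin 3) (a y y' : Fin n → Fin n → Bool) :
    u2hat (selC l x) y y' = avg (cls3 l) x fD (zArr a y y') := by
  rw [u2hat, avg, pairCard_selC, pairCard_eq, Finset.sum_filter, ← div_div, Finset.sum_div]
  congr 1
  refine Finset.sum_congr rfl fun p _ => ?_
  simp only [Bool.and_eq_true, selC_iff, fD, zArr]
  by_cases h : cls3 l p = x <;> rcases Bool.eq_false_or_eq_true (y p.1.1 p.1.2) with hy | hy <;>
    rcases Bool.eq_false_or_eq_true (y' p.1.1 p.1.2) with hy' | hy' <;>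
    simp [h, hy, hy']

lemma stat_eq {n : ℕ} (hn : 0 < n) (t : Fin 4 → ℝ) (q β μ₁ μ₂ γ₁ γ₂ : ℝ) (l : Fin n → Bool)
    (a y y' : Fin n → Fin n → Bool) :
    t 0 * (Real.sqrt n * (muHat1 l y y' - μ₁)) + t 1 * (Real.sqrt n * (muHat2 l y y' - μ₂))
      + t 2 * (Real.sqrt n * (gammaHat1 l y y' - γ₁))
      + t 3 * (Real.sqrt n * (gammaHat2 l y y' - γ₂))
    = Tstat (aC t) (cC t) ![q + μ₁ / Real.sqrt n, q + μ₂ / Real.sqrt n, q]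
        ![β - γ₁ / Real.sqrt n, β - γ₂ / Real.sqrt n, β] l (zArr a y y') := by
  have u0 := u1hat_eq l 0 a y y'
  have u1 := u1hat_eq l 1 a y y'
  have u2 := u1hat_eq l 2 a y y'
  have v0 := u2hat_eq l 0 a y y'
  have v1 := u2hat_eq l 1 a y y'
  have v2 := u2hat_eq l 2 a y y'
  simp only [selC, Matrix.cons_val] at u0 u1 u2 v0 v1 v2
  simp only [muHat1, muHat2, gammaHat1, gammaHat2, betaHat, u0, u1, u2, v0, v1, v2, Tstat,
    Fin.sum_univ_three, gfun, aC, cC, Matrix.cons_val]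
  set r := Real.sqrt n with hr
  have hr0 : 0 < r := Real.sqrt_pos.2 (by exact_mod_cast hn)
  have hrr : (n : ℝ) = r * r := (Real.mul_self_sqrt (Nat.cast_nonneg n)).symm
  have e1 : ∀ m : ℝ, r * r * (m / r) = r * m := fun m => by field_simp
  rw [hrr]
  linear_combination t 0 * e1 μ₁ + t 1 * e1 μ₂ + t 2 * e1 γ₁ + t 3 * e1 γ₂
/-! ### Part 11: conclusion -/

lemma lab_cdf_inter {κ q β m₁ m₂ g₁ g₂ : ℝ} (hκ0 : 0 < κ) (hκ1 : κ < 1) (hq0 : 0 < q)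
    (hq1 : q < 1) (hβ0 : 0 < β) (hβ1 : β < 1) {t : Fin 4 → ℝ} (ht : t ≠ 0) (x : ℝ) :
    Tendsto (fun u : Lab => (arrMeas (cls3 u.2) (par q m₁ m₂ u.1) (par β g₁ g₂ u.1)).real
      {z | Tstat (aC t) (cC t) (par q m₁ m₂ u.1) (par β g₁ g₂ u.1) u.2 z ≤ x ∧
        ¬ ∀ p, (z p).2.1 = (z p).2.2}) (labF κ)
      (nhds ((gaussianReal 0 (limVar q β (rhoL κ) t).toNNReal (Set.Iic x)).toReal)) := by
  have h1 := lab_cdf (m₁ := m₁) (m₂ := m₂) (g₁ := g₁) (g₂ := g₂) hκ0 hκ1 hq0 hq1 hβ0 hβ1 ht x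
  have h2 := lab_agree (m₁ := m₁) (m₂ := m₂) (g₁ := g₁) (g₂ := g₂) hκ0 hκ1 hq0 hq1 hβ0 hβ1
  have h3 := h1.sub h2
  rw [sub_zero] at h3
  refine tendsto_of_tendsto_of_tendsto_of_le_of_le h3 h1 (fun u => ?_) (fun u => ?_)
  · have := arrMeas_isProb (cl := cls3 u.2) (par_mem q m₁ m₂ u.1) (par_mem β g₁ g₂ u.1)
    simp only
    rw [sub_le_iff_le_add]
    refine le_trans (measureReal_mono fun z hz => ?_) (measureReal_union_le _ _)
    by_cases h : ∀ p, (z p).2.1 = (z p).2.2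
    · exact Or.inr h
    · exact Or.inl ⟨hz, h⟩
  · have := arrMeas_isProb (cl := cls3 u.2) (par_mem q m₁ m₂ u.1) (par_mem β g₁ g₂ u.1)
    exact measureReal_mono fun z hz => hz.1

lemma lab_disagree {κ q β m₁ m₂ g₁ g₂ : ℝ} (hκ0 : 0 < κ) (hκ1 : κ < 1) (hq0 : 0 < q)
    (hq1 : q < 1) (hβ0 : 0 < β) (hβ1 : β < 1) :
    Tendsto (fun u : Lab => (arrMeas (cls3 u.2) (par q m₁ m₂ u.1) (par β g₁ g₂ u.1)).real
      {z | ¬ ∀ p, (z p).2.1 = (z p).2.2}) (labF κ) (nhds 1) := by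
  have h2 := lab_agree (m₁ := m₁) (m₂ := m₂) (g₁ := g₁) (g₂ := g₂) hκ0 hκ1 hq0 hq1 hβ0 hβ1
  have h3 := (tendsto_const_nhds (x := (1 : ℝ))).sub h2
  rw [sub_zero] at h3
  refine h3.congr fun u => ?_
  have := arrMeas_isProb (cl := cls3 u.2) (par_mem q m₁ m₂ u.1) (par_mem β g₁ g₂ u.1)
  rw [← probReal_compl_eq_one_sub MeasurableSet.of_discrete]
  rfl

theorem statement_14
    (κ q β μ₁ μ₂ γ₁ γ₂ : ℝ)
    (hκ0 : 0 < κ) (hκ1 : κ < 1) (hq0 : 0 < q) (hq1 : q < 1)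
    (hβ0 : 0 < β) (hβ1 : β < 1)
    (Ω : ℕ → Type) [mΩ : ∀ n, MeasurableSpace (Ω n)] (P : ∀ n, Measure (Ω n))
    (c : ∀ n, Ω n → Fin n → Bool)
    (A Y Y' : ∀ n, Ω n → Fin n → Fin n → Bool)
    (hmodel : ∀ᶠ n : ℕ in atTop,
      IsObsSBM (P n) n
        (sbmB (q + μ₁ / Real.sqrt n) (q + μ₂ / Real.sqrt n) q)
        (sbmB (β - γ₁ / Real.sqrt n) (β - γ₂ / Real.sqrt n) β)
        κ (c n) (A n) (Y n) (Y' n)) :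
    ∃ SigmaM : Matrix (Fin 4) (Fin 4) ℝ, SigmaM.PosDef ∧
      ∀ t : Fin 4 → ℝ, t ≠ 0 → ∀ x : ℝ,
        Tendsto (fun n =>
            ((ProbabilityTheory.cond (P n) {ω | Y n ω ≠ Y' n ω})
              {ω | t 0 * (Real.sqrt n *
                    (muHat1 (c n ω) (Y n ω) (Y' n ω) - μ₁))
                + t 1 * (Real.sqrt n *
                    (muHat2 (c n ω) (Y n ω) (Y' n ω) - μ₂))
                + t 2 * (Real.sqrt n *
                    (gammaHat1 (c n ω) (Y n ω) (Y' n ω) - γ₁))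
                + t 3 * (Real.sqrt n *
                    (gammaHat2 (c n ω) (Y n ω) (Y' n ω) - γ₂)) ≤ x}).toReal)
          atTop
          (nhds ((gaussianReal 0 (Real.toNNReal (quadForm4 SigmaM t))
            (Set.Iic x)).toReal)) := by
  have hκ : κ ∈ Set.Icc (0 : ℝ) 1 := ⟨hκ0.le, hκ1.le⟩
  refine ⟨sigModel q β (rhoL κ), sigModel_posDef hq0 hq1 hβ0 hβ1 (rhoL_pos hκ0 hκ1), ?_⟩
  intro t ht x
  rw [quadForm_sigModel]
  have hprob : ∀ u : Lab, IsProbabilityMeasure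
      (arrMeas (cls3 u.2) (par q μ₁ μ₂ u.1) (par β (-γ₁) (-γ₂) u.1)) :=
    fun u => arrMeas_isProb (par_mem _ _ _ _) (par_mem _ _ _ _)
  have hnum := lab_average hκ (fun u => ⟨measureReal_nonneg, measureReal_le_one⟩)
    (lab_cdf_inter (m₁ := μ₁) (m₂ := μ₂) (g₁ := -γ₁) (g₂ := -γ₂) hκ0 hκ1 hq0 hq1 hβ0 hβ1 ht x)
  have hden := lab_average hκ (fun u => ⟨measureReal_nonneg, measureReal_le_one⟩)
    (lab_disagree (m₁ := μ₁) (m₂ := μ₂) (g₁ := -γ₁) (g₂ := -γ₂) hκ0 hκ1 hq0 hq1 hβ0 hβ1)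
  have hlim := hnum.div hden one_ne_zero
  rw [div_one] at hlim
  refine hlim.congr' ?_
  filter_upwards [hmodel, par_eventually (m₁ := μ₁) (m₂ := μ₂) hq0 hq1,
    par_eventually (m₁ := -γ₁) (m₂ := -γ₂) hβ0 hβ1, eventually_gt_atTop 0] with n hM hp hb hn
  have hbe : par β (-γ₁) (-γ₂) n = ![β - γ₁ / Real.sqrt n, β - γ₂ / Real.sqrt n, β] := by
    rw [hb.2, neg_div, neg_div, ← sub_eq_add_neg, ← sub_eq_add_neg]
  have hP := hM.isProb
  have hlaw := sbm_law hκ (par_mem q μ₁ μ₂ n) (par_mem β (-γ₁) (-γ₂) n) hp.2 hbe hM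
  have hdis : {ω | Y n ω ≠ Y' n ω} = {ω | zArr (A n ω) (Y n ω) (Y' n ω) ∈
      {z : Prs n → Bool × Bool × Bool | ¬ ∀ p, (z p).2.1 = (z p).2.2}} := by
    ext ω
    have e := eq_symExt (hM.symmY ω) (hM.looplessY ω) (fun p => Y' n ω p.1.1 p.1.2)
    rw [← (eq_symExt (hM.symmY' ω) (hM.looplessY' ω) (fun p => Y' n ω p.1.1 p.1.2)).2
      (fun _ => rfl)] at e
    exact not_congr e
  obtain ⟨hd1, hd2⟩ := hlaw (fun _ => {z | ¬ ∀ p, (z p).2.1 = (z p).2.2})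
  obtain ⟨hn1, -⟩ := hlaw (fun l => {z | Tstat (aC t) (cC t) (par q μ₁ μ₂ n)
    (par β (-γ₁) (-γ₂) n) l z ≤ x ∧ ¬ ∀ p, (z p).2.1 = (z p).2.2})
  rw [← hdis] at hd1 hd2
  rw [ProbabilityTheory.cond, Measure.smul_apply, Measure.restrict_apply₀' hd2, smul_eq_mul,
    ENNReal.toReal_mul, ENNReal.toReal_inv]
  rw [Pi.div_apply]
  rw [← hd1, ← hn1, div_eq_inv_mul]
  congr 1
  rw [measureReal_def]
  congr 2
  rw [hdis]
  ext ω
  rw [Set.mem_inter_iff, Set.mem_ofPred_eq, Set.mem_ofPred_eq, Set.mem_ofPred_eq,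
    stat_eq hn t q β μ₁ μ₂ γ₁ γ₂ (c n ω) (A n ω) (Y n ω) (Y' n ω), hp.2, hbe]
  rfl

end
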